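/- arXiv:2312.05478 — 2 statements merged into one kernel-verified Lean document; each statement's English description precedes it below -/
import Mathlib

section
/- Let λ be a partition of r with conjugate μ = λ', and let k_1,…,k_{λ_1−1} be positive integers with k_c ≤ μ_{c+1} for all c = 1,…,λ_1−1. If Σ_{t=1}^{j} (−1)^{t−1} C(μ_{c+1}−t, μ_{c+1}−k_c) C(j,t) C(μ_c−μ_{c+1}+j+t, t) ≠ 0 for all c = 1,…,λ_1−1 and all j = 1,…,μ_{c+1}, then M^λ / SGR^λ(k_1,…,k_{λ_1−1}) ≅ S^λ as 𝔖_r-modules; equivalently, SGR^λ(k_1,…,k_{λ_1−1}) = G^λ as subspaces of M^λ. -/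
set_option synthInstance.maxHeartbeats 1000000
set_option maxSynthPendingDepth 3
set_option maxHeartbeats 1000000

noncomputable section

namespace Specht

variable (K : Type) [Field K] [CharZero K]
variable {L : ℕ} (μ : Fin L → ℕ) (r : ℕ)

/-- The cells of the Young diagram of `λ`, where `μ = λ'` records the column lengths:
`⟨c, j⟩` is the cell in column `c` and row `j` (`0`-indexed). -/
abbrev Cell : Type := Σ c : Fin L, Fin (μ c)

/-- Young tableaux of shape `λ`: bijective fillings of the diagram of `λ` by `{1, …, r}`. -/
abbrev Tab : Type := Cell μ ≃ Fin r

/-- The free vector space on the set of Young tableaux of shape `λ`. -/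
abbrev FreeTab : Type := Tab μ r →₀ K

/-- The relations `T + S = 0`, for `S` obtained from `T` by a transposition of two entries
in the same column. -/
def colRel : Submodule K (FreeTab K μ r) :=
  Submodule.span K
    {x | ∃ (T : Tab μ r) (c : Fin L) (j₁ j₂ : Fin (μ c)), j₁ ≠ j₂ ∧
      x = Finsupp.single T 1 +
        Finsupp.single ((Equiv.swap (⟨c, j₁⟩ : Cell μ) ⟨c, j₂⟩).trans T) 1}

/-- The module `M^λ` spanned by column tabloids. -/
abbrev MLam : Type := FreeTab K μ r ⧸ colRel K μ r

/-- The column tabloid of a tableau. -/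
def tabloid (T : Tab μ r) : MLam K μ r :=
  Submodule.Quotient.mk (Finsupp.single T 1)

/-- `ρ` is the action of the symmetric group `𝔖_r` on `M^λ` by relabelling entries. -/
def IsTabAction (ρ : Equiv.Perm (Fin r) → (MLam K μ r →ₗ[K] MLam K μ r)) : Prop :=
  ∀ (σ : Equiv.Perm (Fin r)) (T : Tab μ r), ρ σ (tabloid K μ r T) = tabloid K μ r (T.trans σ)

/-- The permutation of the cells exchanging the top `k` cells of column `c+1` with
the `k` cells of column `c` recorded by `A`, in increasing row order. -/
def exchPerm (c : ℕ) (hc : c + 1 < L) (k : ℕ) (hk : k ≤ μ ⟨c+1, hc⟩)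
    (A : Finset (Fin (μ ⟨c, by omega⟩))) (hA : A.card = k) : Equiv.Perm (Cell μ) :=
  (List.ofFn (fun i : Fin k =>
    Equiv.swap (⟨⟨c, by omega⟩, ((A.orderIsoOfFin hA i : A) : Fin (μ ⟨c, by omega⟩))⟩ : Cell μ)
      ⟨⟨c+1, hc⟩, ⟨i.val, by omega⟩⟩)).prod

/-- The Garnir element `g^T_{c,k} = T̄ - Σ S̄ ∈ M^λ`, the sum being over all tableaux `S`
obtained from `T` by exchanging the top `k` entries of column `c+1` with `k` entries of
column `c`, maintaining the vertical order of each exchanged set. -/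
def garnirElt (T : Tab μ r) (c : ℕ) (hc : c + 1 < L) (k : ℕ) (hk : k ≤ μ ⟨c+1, hc⟩) :
    MLam K μ r :=
  tabloid K μ r T -
    ∑ A ∈ (Finset.powersetCard k (Finset.univ : Finset (Fin (μ ⟨c, by omega⟩)))).attach,
      tabloid K μ r
        ((exchPerm μ c hc k hk A.1 (Finset.mem_powersetCard.mp A.2).2).trans T)

/-- The permutation of the cells exchanging the `k` cells of column `c+1` recorded by `B`
with the `k` cells of column `c` recorded by `A`, in increasing row order. -/
def exch2Perm (c : ℕ) (hc : c + 1 < L)  (k : ℕ)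
    (A : Finset (Fin (μ ⟨c, by omega⟩))) (hA : A.card = k)
    (B : Finset (Fin (μ ⟨c+1, hc⟩))) (hB : B.card = k) : Equiv.Perm (Cell μ) :=
  (List.ofFn (fun i : Fin k =>
    Equiv.swap (⟨⟨c, by omega⟩, ((A.orderIsoOfFin hA i : A) : Fin (μ ⟨c, by omega⟩))⟩ : Cell μ)
      ⟨⟨c+1, hc⟩, ((B.orderIsoOfFin hB i : B) : Fin (μ ⟨c+1, hc⟩))⟩)).prod

/-- The symmetrized Garnir element `r^T_{c,k} = C(μ_{c+1},k)·T̄ - Σ S̄ ∈ M^λ`, the sum being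
over all tableaux `S` obtained from `T` by exchanging any `k` entries of column `c+1` with
any `k` entries of column `c`, maintaining the vertical order of each exchanged set. -/
def sgrElt (T : Tab μ r) (c : ℕ) (hc : c + 1 < L) (k : ℕ) : MLam K μ r :=
  ((μ ⟨c+1, hc⟩).choose k : K) • tabloid K μ r T -
    ∑ A ∈ (Finset.powersetCard k (Finset.univ : Finset (Fin (μ ⟨c, by omega⟩)))).attach,
      ∑ B ∈ (Finset.powersetCard k (Finset.univ : Finset (Fin (μ ⟨c+1, hc⟩)))).attach,
        tabloid K μ r
          ((exch2Perm μ c hc k A.1 (Finset.mem_powersetCard.mp A.2).2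
              B.1 (Finset.mem_powersetCard.mp B.2).2).trans T)

/-- The subspace `G^λ ⊆ M^λ` spanned by all Garnir relations. -/
def garnirSub : Submodule K (MLam K μ r) :=
  Submodule.span K
    {x | ∃ (T : Tab μ r) (c : ℕ) (hc : c + 1 < L) (k : ℕ) (hk : k ≤ μ ⟨c+1, hc⟩),
      x = garnirElt K μ r T c hc k hk}

/-- The subspace `GR^λ(k_1, …, k_{λ_1 - 1}) ⊆ M^λ` spanned by the Garnir relations
`g^T_{c,k_c}`. -/
def grSub (kk : ℕ → ℕ) : Submodule K (MLam K μ r) :=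
  Submodule.span K
    {x | ∃ (T : Tab μ r) (c : ℕ) (hc : c + 1 < L) (hk : kk c ≤ μ ⟨c+1, hc⟩),
      x = garnirElt K μ r T c hc (kk c) hk}

/-- The subspace `SGR^λ(k_1, …, k_{λ_1 - 1}) ⊆ M^λ` spanned by the symmetrized Garnir
relations `r^T_{c,k_c}`. -/
def sgrSub (kk : ℕ → ℕ) : Submodule K (MLam K μ r) :=
  Submodule.span K
    {x | ∃ (T : Tab μ r) (c : ℕ) (hc : c + 1 < L), x = sgrElt K μ r T c hc (kk c)}

/-- Quotients `M₁ ⧸ N₁` and `M₂ ⧸ N₂` are isomorphic compatibly with the given actions. -/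
def IsQuotIso {G' : Type} {M₁ M₂ : Type} [AddCommGroup M₁] [Module K M₁]
    [AddCommGroup M₂] [Module K M₂]
    (N₁ : Submodule K M₁) (N₂ : Submodule K M₂)
    (ρ₁ : G' → M₁ →ₗ[K] M₁) (ρ₂ : G' → M₂ →ₗ[K] M₂) : Prop :=
  ∃ e : (M₁ ⧸ N₁) ≃ₗ[K] (M₂ ⧸ N₂),
    ∀ (g : G') (x : M₁) (y : M₂),
      e (Submodule.Quotient.mk x) = Submodule.Quotient.mk y →
      e (Submodule.Quotient.mk (ρ₁ g x)) = Submodule.Quotient.mk (ρ₂ g y)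

end Specht

section Sl2

variable {K V : Type*} [Field K] [AddCommGroup V] [Module K V] {u d h : Module.End K V}

theorem raise_pow_weight (hu : h * u = u * h + 2 • u) {c : K} {φ : V} (hφ : h φ = c • φ) (b : ℕ) :
    h ((u ^ b) φ) = (c + 2 * b) • (u ^ b) φ := by
  induction b with
  | zero => simp [hφ]
  | succ b ih =>
    have h1 := LinearMap.congr_fun hu ((u ^ b) φ)
    simp only [Module.End.mul_apply, LinearMap.add_apply, ih, map_smul, LinearMap.smul_apply] at h1
    rw [pow_succ', Module.End.mul_apply, h1]
    push_cast
    module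

theorem lower_pow_weight (hd : h * d = d * h - 2 • d) {c : K} {φ : V} (hφ : h φ = c • φ) (b : ℕ) :
    h ((d ^ b) φ) = (c - 2 * b) • (d ^ b) φ := by
  induction b with
  | zero => simp [hφ]
  | succ b ih =>
    have h1 := LinearMap.congr_fun hd ((d ^ b) φ)
    simp only [Module.End.mul_apply, LinearMap.sub_apply, ih, map_smul, LinearMap.smul_apply] at h1
    rw [pow_succ', Module.End.mul_apply, h1]
    push_cast
    module

theorem raise_pow_lower (hud : u * d = d * u + h) (hu : h * u = u * h + 2 • u)
    {c : K} {φ : V} (hφ : h φ = c • φ) (b : ℕ) :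
    (u ^ (b + 1)) (d φ) = d ((u ^ (b + 1)) φ) + ((b + 1) * (c + b) : K) • (u ^ b) φ := by
  induction b with
  | zero =>
    have h1 := LinearMap.congr_fun hud φ
    simp only [Module.End.mul_apply, LinearMap.add_apply, hφ] at h1
    simp [h1]
  | succ b ih =>
    have h1 := LinearMap.congr_fun hud ((u ^ (b + 1)) φ)
    simp only [Module.End.mul_apply, LinearMap.add_apply, raise_pow_weight hu hφ] at h1
    have h2 : (u ^ (b + 1)) φ = u ((u ^ b) φ) := by rw [pow_succ', Module.End.mul_apply]
    rw [pow_succ' u (b + 1), Module.End.mul_apply, ih, map_add, h1, Module.End.mul_apply, map_smul,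
      ← h2]
    push_cast
    module

theorem raise_pow_lower_pow (hud : u * d = d * u + h) (hu : h * u = u * h + 2 • u)
    (hd : h * d = d * h - 2 • d) {c : K} {ψ : V} (hψ : h ψ = c • ψ) {a : ℕ}
    (ha : (u ^ (a + 1)) ψ = 0) (t : ℕ) :
    (u ^ (a + t)) ((d ^ t) ψ) =
      (∏ i ∈ Finset.range t, ((a + i + 1 : K) * (c + a - i))) • (u ^ a) ψ := by
  induction t with
  | zero => simp
  | succ t ih =>
    have h1 := raise_pow_lower hud hu (lower_pow_weight hd hψ t) (a + t)
    have h2 : (u ^ (a + t + 1)) ((d ^ t) ψ) = 0 := by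
      rw [pow_succ', Module.End.mul_apply, ih, map_smul, ← Module.End.mul_apply, ← pow_succ', ha,
        smul_zero]
    rw [pow_succ' d, Module.End.mul_apply, ← add_assoc, h1, h2, map_zero, zero_add, ih,
      Finset.prod_range_succ, smul_smul]
    push_cast
    congr 1
    ring

theorem raise_pow_lower_pow_raise_pow (hud : u * d = d * u + h) (hu : h * u = u * h + 2 • u)
    (hd : h * d = d * h - 2 • d) {w : ℕ} {θ : V} (hθ : h θ = (w : K) • θ) {j t : ℕ} (htj : t ≤ j)
    (hj : (u ^ (j + 1)) θ = 0) :
    (u ^ j) ((d ^ t) ((u ^ t) θ)) =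
      ((t.factorial : K) ^ 2 * j.choose t * (w + j + t).choose t) • (u ^ j) θ := by
  obtain ⟨a, rfl⟩ := Nat.exists_eq_add_of_le' htj
  have h0 : ∀ b, (u ^ b) ((u ^ t) θ) = (u ^ (b + t)) θ := fun b => by
    rw [pow_add, Module.End.mul_apply]
  rw [raise_pow_lower_pow hud hu hd (raise_pow_weight hu hθ t)
    (by rw [h0, ← hj]; congr 2; omega), h0, Finset.prod_mul_distrib]
  congr 1
  have h1 := Nat.ascFactorial_eq_factorial_mul_choose a t
  have h2 := Nat.descFactorial_eq_factorial_mul_choose (w + (a + t) + t) t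
  rw [Nat.ascFactorial_eq_prod_range] at h1
  rw [Nat.descFactorial_eq_prod_range] at h2
  have h3 := congrArg (Nat.cast (R := K)) h1
  have h4 := congrArg (Nat.cast (R := K)) h2
  push_cast at h3 h4
  have h5 : ∏ i ∈ Finset.range t, (a + i + 1 : K) = t.factorial * (a + t).choose t := by
    rw [← h3]
    exact Finset.prod_congr rfl fun i _ => by ring
  have h6 : ∏ i ∈ Finset.range t, (w + 2 * t + a - i : K) =
      t.factorial * (w + (a + t) + t).choose t := by
    rw [← h4]
    refine Finset.prod_congr rfl fun i hi => ?_
    rw [Nat.cast_sub (by have := Finset.mem_range.1 hi; omega)]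
    push_cast
    ring
  rw [h5, h6]
  ring

theorem raise_eq_zero_of_sum_lower_raise (hud : u * d = d * u + h) (hu : h * u = u * h + 2 • u)
    (hd : h * d = d * h - 2 • d) {w n : ℕ} {θ : V} (hθ : h θ = (w : K) • θ)
    (hn : (u ^ (n + 1)) θ = 0) (a : ℕ → K)
    (hsum : ∑ t ∈ Finset.Icc 1 n, a t • (d ^ t) ((u ^ t) θ) = 0)
    (ha : ∀ j, 1 ≤ j → j ≤ n → ∑ t ∈ Finset.Icc 1 j,
      a t * ((t.factorial : K) ^ 2 * j.choose t * (w + j + t).choose t) ≠ 0) :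
    u θ = 0 := by
  have key : ∀ i ≤ n, (u ^ (n - i + 1)) θ = 0 := by
    intro i
    induction i with
    | zero => exact fun _ => hn
    | succ i ih =>
      intro hi
      obtain ⟨j, hj⟩ : ∃ j, j = n - i := ⟨_, rfl⟩
      have hj1 : n - (i + 1) + 1 = j := by omega
      have ihj : (u ^ (j + 1)) θ = 0 := hj ▸ ih (by omega)
      rw [hj1]
      have h1 := congrArg (u ^ j) hsum
      rw [map_sum, map_zero, ← Finset.sum_subset (Finset.Icc_subset_Icc_right (by omega : j ≤ n))]
        at h1
      · rw [Finset.sum_congr rfl (fun t ht => by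
          rw [map_smul, raise_pow_lower_pow_raise_pow hud hu hd hθ (Finset.mem_Icc.1 ht).2 ihj,
            smul_smul]), ← Finset.sum_smul] at h1
        exact (smul_eq_zero.1 h1).resolve_left (ha j (by omega) (by omega))
      · intro t ht ht'
        have htj : j + 1 ≤ t := by
          simp only [Finset.mem_Icc] at ht ht'
          omega
        obtain ⟨s, rfl⟩ := Nat.exists_eq_add_of_le' htj
        rw [pow_add u s, Module.End.mul_apply, ihj]
        simp
  simpa using key n le_rfl

end Sl2

section Boolean

open Finset

theorem Finset.sum_powersetCard_sum_sdiff_insert {α M : Type*} [DecidableEq α] [AddCommMonoid M]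
    (t : ℕ) (s : Finset α) (f : Finset α → M) :
    ∑ A ∈ powersetCard t s, ∑ x ∈ s \ A, f (insert x A) =
      (t + 1) • ∑ A ∈ powersetCard (t + 1) s, f A := by
  have h : ∑ A ∈ powersetCard (t + 1) s, ∑ x ∈ A, f A =
      (t + 1) • ∑ A ∈ powersetCard (t + 1) s, f A := by
    rw [smul_sum]
    refine sum_congr rfl fun A hA => ?_
    rw [sum_const, (mem_powersetCard.1 hA).2]
  rw [← h, sum_sigma', sum_sigma']
  refine sum_bij' (fun p _ => ⟨insert p.2 p.1, p.2⟩) (fun p _ => ⟨p.1.erase p.2, p.2⟩)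
    ?_ ?_ ?_ ?_ ?_
  · rintro ⟨A, x⟩ hp
    simp only [mem_sigma, mem_powersetCard, mem_sdiff] at hp ⊢
    refine ⟨⟨insert_subset hp.2.1 hp.1.1, ?_⟩, mem_insert_self _ _⟩
    rw [card_insert_of_notMem hp.2.2, hp.1.2]
  · rintro ⟨A, x⟩ hp
    simp only [mem_sigma, mem_powersetCard, mem_sdiff] at hp ⊢
    refine ⟨⟨(erase_subset _ _).trans hp.1.1, ?_⟩, hp.1.1 hp.2, notMem_erase _ _⟩
    rw [card_erase_of_mem hp.2, hp.1.2]
    rfl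
  · rintro ⟨A, x⟩ hp
    simp only [mem_sigma, mem_sdiff] at hp
    simp [erase_insert hp.2.2]
  · rintro ⟨A, x⟩ hp
    simp only [mem_sigma] at hp
    simp [insert_erase hp.2]
  · rintro ⟨A, x⟩ _
    rfl

theorem Finset.sum_powerset_neg_one_pow_smul_sum_powerset {α M : Type*} [DecidableEq α]
    [AddCommGroup M] (B : Finset α) (H : Finset α → M) :
    ∑ B' ∈ B.powerset, (-1 : ℤ) ^ #B' • ∑ B'' ∈ B'.powerset, H B'' = (-1 : ℤ) ^ #B • H B := by
  induction B using Finset.induction_on generalizing H with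
  | empty => simp
  | insert b B hb ih =>
    have h : ∀ B' ∈ B.powerset, b ∉ B' := fun B' hB' hb' => hb (mem_powerset.1 hB' hb')
    rw [sum_powerset_insert hb, card_insert_of_notMem hb, pow_succ, mul_neg_one, neg_smul,
      ← ih (fun B' => H (insert b B')), ← sum_add_distrib, ← sum_neg_distrib]
    refine sum_congr rfl fun B' hB' => ?_
    rw [card_insert_of_notMem (h B' hB'), sum_powerset_insert (h B' hB'), pow_succ]
    module

variable (K : Type*) {α Q : Type*} [Field K] [AddCommGroup Q] [Module K Q]

section

variable [DecidableEq α]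

theorem Finset.sum_powersetCard_sum_powerset {M : Type*} [AddCommMonoid M] (S : Finset α) {k : ℕ}
    (hk : k ≤ #S) (y : Finset α → M) :
    ∑ B ∈ powersetCard k S, ∑ B' ∈ B.powerset, y B' =
      ∑ t ∈ range (#S + 1), (#S - t).choose (#S - k) • ∑ B' ∈ powersetCard t S, y B' := by
  have h1 : ∑ B ∈ powersetCard k S, ∑ B' ∈ B.powerset, y B' =
      ∑ B' ∈ S.powerset, (#S - #B').choose (#S - k) • y B' := by
    rw [sum_comm' (t' := S.powerset) (s' := fun B' => (powersetCard k S).filter (B' ⊆ ·))]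
    · refine sum_congr rfl fun B' hB' => ?_
      rw [sum_const]
      rw [mem_powerset] at hB'
      have hcard := card_le_card hB'
      congr 1
      by_cases h : #B' ≤ k
      · rw [card_filter_powersetCard_subset _ _ _ hB' h]
        rw [← Nat.choose_symm (by omega)]
        congr 1
        omega
      · rw [Nat.choose_eq_zero_of_lt (by omega), card_eq_zero, filter_eq_empty_iff]
        intro B hB hBB
        have := card_le_card hBB
        rw [(mem_powersetCard.1 hB).2] at this
        exact h this
    · intro B B'
      simp only [mem_powersetCard, mem_powerset, mem_filter]
      exact ⟨fun h => ⟨⟨h.1, h.2⟩, h.2.trans h.1.1⟩, fun h => h.1⟩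
  rw [h1, ← sum_fiberwise_of_maps_to (t := range (#S + 1)) (g := card)
    (fun B hB => mem_range.2 (Nat.lt_succ_of_le (card_le_card (mem_powerset.1 hB))))]
  refine sum_congr rfl fun t _ => ?_
  rw [← powersetCard_eq_filter, smul_sum]
  refine sum_congr rfl fun B hB => ?_
  rw [(mem_powersetCard.1 hB).2]

/-- Sum of the values of a function at all sets obtained by removing one element. -/
def subsetDown : Module.End K (Finset α → Q) where
  toFun φ S := ∑ x ∈ S, φ (S.erase x)
  map_add' φ ψ := by ext S; simp [sum_add_distrib]
  map_smul' a φ := by ext S; simp [smul_sum]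

variable {K}

theorem subsetDown_apply (φ : Finset α → Q) (S : Finset α) :
    subsetDown K φ S = ∑ x ∈ S, φ (S.erase x) := rfl

theorem subsetDown_pow_apply (t : ℕ) (φ : Finset α → Q) (S : Finset α) :
    (subsetDown K ^ t) φ S = (t.factorial : K) • ∑ B ∈ powersetCard t S, φ (S \ B) := by
  induction t generalizing φ with
  | zero => simp
  | succ t ih =>
    have h := sum_powersetCard_sum_sdiff_insert t S (fun A => φ (S \ A))
    rw [← Nat.cast_smul_eq_nsmul K] at h
    rw [pow_succ, Module.End.mul_apply, ih, Nat.factorial_succ, mul_comm, Nat.cast_mul, mul_smul,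
      ← h]
    simp only [subsetDown_apply, sdiff_insert]

end

section

variable [Fintype α]

/-- Multiplication by the weight `|α| - 2|S|` at the set `S`. -/
def subsetWeight : Module.End K (Finset α → Q) where
  toFun φ S := ((Fintype.card α : K) - 2 * #S) • φ S
  map_add' φ ψ := by ext S; simp
  map_smul' a φ := by ext S; exact smul_comm _ _ _

variable {K}

theorem subsetWeight_apply (φ : Finset α → Q) (S : Finset α) :
    subsetWeight K φ S = ((Fintype.card α : K) - 2 * #S) • φ S := rfl

end

variable [Fintype α] [DecidableEq α]

/-- Sum of the values of a function at all sets obtained by adding one element. -/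
def subsetUp : Module.End K (Finset α → Q) where
  toFun φ S := ∑ x ∈ Sᶜ, φ (insert x S)
  map_add' φ ψ := by ext S; simp [sum_add_distrib]
  map_smul' a φ := by ext S; simp [smul_sum]

variable {K}

theorem subsetUp_apply (φ : Finset α → Q) (S : Finset α) :
    subsetUp K φ S = ∑ x ∈ Sᶜ, φ (insert x S) := rfl

theorem subsetUp_mul_subsetDown :
    (subsetUp K * subsetDown K : Module.End K (Finset α → Q)) =
      subsetDown K * subsetUp K + subsetWeight K := by
  refine LinearMap.ext fun φ => funext fun S => ?_
  simp only [Module.End.mul_apply, LinearMap.add_apply, Pi.add_apply, subsetUp_apply,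
    subsetDown_apply, subsetWeight_apply]
  have h1 : ∑ x ∈ Sᶜ, ∑ y ∈ insert x S, φ ((insert x S).erase y) =
      #Sᶜ • φ S + ∑ x ∈ Sᶜ, ∑ y ∈ S, φ (insert x (S.erase y)) := by
    rw [← sum_const, ← sum_add_distrib]
    refine sum_congr rfl fun x hx => ?_
    rw [mem_compl] at hx
    rw [sum_insert hx, erase_insert hx]
    congr 1
    refine sum_congr rfl fun y hy => ?_
    rw [erase_insert_of_ne (by rintro rfl; exact hx hy)]
  have h2 : ∑ y ∈ S, ∑ x ∈ (S.erase y)ᶜ, φ (insert x (S.erase y)) =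
      #S • φ S + ∑ x ∈ Sᶜ, ∑ y ∈ S, φ (insert x (S.erase y)) := by
    rw [sum_comm (s := Sᶜ), ← sum_const, ← sum_add_distrib]
    refine sum_congr rfl fun y hy => ?_
    rw [compl_erase, sum_insert (by simpa using hy), insert_erase hy]
  rw [h1, h2, card_compl, ← Nat.cast_smul_eq_nsmul K, ← Nat.cast_smul_eq_nsmul K,
    Nat.cast_sub (card_le_univ S)]
  module

theorem subsetWeight_mul_subsetUp :
    (subsetWeight K * subsetUp K : Module.End K (Finset α → Q)) =
      subsetUp K * subsetWeight K + 2 • subsetUp K := by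
  refine LinearMap.ext fun φ => funext fun S => ?_
  simp only [Module.End.mul_apply, LinearMap.add_apply, LinearMap.smul_apply, Pi.add_apply,
    Pi.smul_apply, subsetUp_apply, subsetWeight_apply, smul_sum, ← sum_add_distrib]
  refine sum_congr rfl fun x hx => ?_
  rw [card_insert_of_notMem (mem_compl.1 hx)]
  push_cast
  module

theorem subsetWeight_mul_subsetDown :
    (subsetWeight K * subsetDown K : Module.End K (Finset α → Q)) =
      subsetDown K * subsetWeight K - 2 • subsetDown K := by
  refine LinearMap.ext fun φ => funext fun S => ?_
  simp only [Module.End.mul_apply, LinearMap.sub_apply, LinearMap.smul_apply, Pi.sub_apply,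
    Pi.smul_apply, subsetDown_apply, subsetWeight_apply, smul_sum, ← sum_sub_distrib]
  refine sum_congr rfl fun x hx => ?_
  rw [card_erase_of_mem hx, Nat.cast_sub (card_pos.2 ⟨x, hx⟩)]
  push_cast
  module

theorem subsetUp_pow_apply (t : ℕ) (φ : Finset α → Q) (S : Finset α) :
    (subsetUp K ^ t) φ S = (t.factorial : K) • ∑ A ∈ powersetCard t Sᶜ, φ (S ∪ A) := by
  induction t generalizing φ with
  | zero => simp
  | succ t ih =>
    have h := sum_powersetCard_sum_sdiff_insert t Sᶜ (fun A => φ (S ∪ A))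
    rw [← Nat.cast_smul_eq_nsmul K] at h
    rw [pow_succ, Module.End.mul_apply, ih, Nat.factorial_succ, mul_comm, Nat.cast_mul, mul_smul,
      ← h]
    simp only [subsetUp_apply, compl_union, union_insert, sdiff_eq_inter_compl]

/-- Sum of `θ` over all sets obtained from `S` by exchanging `B` with a subset of `Sᶜ`. -/
def exchangeSum (θ : Finset α → Q) (S B : Finset α) : Q :=
  ∑ A ∈ powersetCard #B Sᶜ, θ (S \ B ∪ A)

theorem sum_powersetCard_compl_sdiff (θ : Finset α → Q) {S B : Finset α} (hB : B ⊆ S) :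
    ∑ C ∈ powersetCard #B (S \ B)ᶜ, θ (S \ B ∪ C) = ∑ B' ∈ B.powerset, exchangeSum θ S B' := by
  simp only [exchangeSum]
  rw [sum_sigma']
  refine sum_bij' (fun C _ => ⟨B \ C, C \ S⟩) (fun p _ => p.2 ∪ (B \ p.1)) ?_ ?_ ?_ ?_ ?_
  · intro C hC
    simp only [mem_powersetCard, mem_sigma, mem_powerset] at hC ⊢
    refine ⟨sdiff_subset, fun x hx => by simp_all, ?_⟩
    have h1 : C \ S = C \ B := by
      ext x
      have := @hC.1 x
      simp only [mem_compl, mem_sdiff] at this ⊢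
      have := @hB x
      tauto
    rw [h1]
    exact (card_sdiff_comm hC.2.symm).symm
  · rintro ⟨B', A⟩ hp
    simp only [mem_powersetCard, mem_sigma, mem_powerset] at hp ⊢
    obtain ⟨hB', hA, hc⟩ := hp
    have hd : Disjoint A (B \ B') := by
      rw [disjoint_left]
      intro x hx hx'
      exact mem_compl.1 (hA hx) (hB (mem_sdiff.1 hx').1)
    refine ⟨fun x hx => ?_, ?_⟩
    · have := @hA x
      simp only [mem_compl, mem_union, mem_sdiff] at hx this ⊢
      tauto
    · rw [card_union_of_disjoint hd, hc, card_sdiff_of_subset hB']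
      have := card_le_card hB'
      omega
  · intro C hC
    simp only [mem_powersetCard] at hC
    ext x
    have := @hC.1 x
    simp only [mem_compl, mem_union, mem_sdiff] at this ⊢
    have := @hB x
    tauto
  · rintro ⟨B', A⟩ hp
    simp only [mem_powersetCard, mem_sigma, mem_powerset] at hp
    obtain ⟨hB', hA, hc⟩ := hp
    congr 1
    · ext x
      have h1 := @hA x
      have h2 := @hB x
      have h3 := @hB' x
      simp only [mem_compl, mem_union, mem_sdiff] at h1 ⊢
      tauto
    · ext x
      have h1 := @hA x
      have h2 := @hB x
      have h3 := @hB' x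
      simp only [mem_compl, mem_union, mem_sdiff] at h1 ⊢
      tauto
  · intro C hC
    simp only [mem_powersetCard] at hC
    congr 1
    ext x
    have := @hC.1 x
    simp only [mem_compl, mem_union, mem_sdiff] at this ⊢
    have := @hB x
    tauto

theorem neg_one_pow_smul_exchangeSum (θ : Finset α → Q) {S B : Finset α} (hB : B ⊆ S) :
    (-1 : ℤ) ^ #B • exchangeSum θ S B = ∑ B' ∈ B.powerset,
      (-1 : ℤ) ^ #B' • ∑ C ∈ powersetCard #B' (S \ B')ᶜ, θ (S \ B' ∪ C) := by
  rw [← sum_powerset_neg_one_pow_smul_sum_powerset B (exchangeSum θ S)]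
  refine sum_congr rfl fun B' hB' => ?_
  rw [sum_powersetCard_compl_sdiff θ ((mem_powerset.1 hB').trans hB)]

theorem choose_smul_sub_sum_exchangeSum [CharZero K] (θ : Finset α → Q) (S : Finset α) {k : ℕ}
    (hk : k ≤ #S) :
    ((#S).choose k : K) • θ S - (-1 : ℤ) ^ k • ∑ B ∈ powersetCard k S, exchangeSum θ S B =
      ∑ t ∈ Icc 1 #S, ((-1) ^ (t - 1) * ((#S - t).choose (#S - k) : K) / (t.factorial : K) ^ 2) •
        (subsetDown K ^ t) ((subsetUp K ^ t) θ) S := by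
  have h1 : (-1 : ℤ) ^ k • ∑ B ∈ powersetCard k S, exchangeSum θ S B =
      ∑ B ∈ powersetCard k S, ∑ B' ∈ B.powerset,
        (-1 : ℤ) ^ #B' • ∑ C ∈ powersetCard #B' (S \ B')ᶜ, θ (S \ B' ∪ C) := by
    rw [smul_sum]
    refine sum_congr rfl fun B hB => ?_
    rw [← neg_one_pow_smul_exchangeSum θ (mem_powersetCard.1 hB).1, (mem_powersetCard.1 hB).2]
  have h2 : Icc 1 #S = Ico 1 (#S + 1) := rfl
  rw [h1, sum_powersetCard_sum_powerset S hk, h2, range_eq_Ico, sum_eq_sum_Ico_succ_bot (by omega),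
    powersetCard_zero, Nat.sub_zero, Nat.choose_symm hk]
  simp only [sum_singleton, card_empty, pow_zero, one_smul, powersetCard_zero, sdiff_empty,
    union_empty, ← Nat.cast_smul_eq_nsmul K]
  rw [sub_add_cancel_left, ← sum_neg_distrib]
  refine sum_congr rfl fun t ht => ?_
  obtain ⟨s, rfl⟩ := Nat.exists_eq_add_of_le' (mem_Ico.1 ht).1
  rw [subsetDown_pow_apply]
  simp only [subsetUp_pow_apply]
  have h3 : ∑ B ∈ powersetCard (s + 1) S, (-1 : ℤ) ^ #B •
      ∑ C ∈ powersetCard #B (S \ B)ᶜ, θ (S \ B ∪ C) = (-1 : K) ^ (s + 1) •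
      ∑ B ∈ powersetCard (s + 1) S, ∑ C ∈ powersetCard (s + 1) (S \ B)ᶜ, θ (S \ B ∪ C) := by
    rw [smul_sum]
    refine sum_congr rfl fun B hB => ?_
    rw [(mem_powersetCard.1 hB).2, ← Int.cast_smul_eq_zsmul K]
    simp
  have hf : ((s + 1).factorial : K) ≠ 0 := Nat.cast_ne_zero.2 (Nat.factorial_ne_zero _)
  rw [h3, ← smul_sum, smul_smul, smul_smul, smul_smul, ← neg_smul]
  congr 1
  rw [Nat.add_sub_cancel]
  field_simp
  ring

theorem eq_neg_one_pow_smul_exchangeSum [CharZero K] {n k : ℕ} (θ : Finset α → Q)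
    (hθ : ∀ S, #S ≠ n → θ S = 0) (hn : 2 * n ≤ Fintype.card α) (hk : k ≤ n)
    (hrel : ∀ S : Finset α, #S = n →
      (n.choose k : K) • θ S = (-1 : ℤ) ^ k • ∑ B ∈ powersetCard k S, exchangeSum θ S B)
    (hcond : ∀ j, 1 ≤ j → j ≤ n → ∑ t ∈ Icc 1 j, (-1 : K) ^ (t - 1) * ((n - t).choose (n - k) : K) *
      (j.choose t : K) * ((Fintype.card α - 2 * n + j + t).choose t : K) ≠ 0)
    {S B : Finset α} (hS : #S = n) (hB : B ⊆ S) :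
    θ S = (-1 : ℤ) ^ #B • exchangeSum θ S B := by
  have hup : subsetUp K θ = 0 := by
    refine raise_eq_zero_of_sum_lower_raise subsetUp_mul_subsetDown subsetWeight_mul_subsetUp
      subsetWeight_mul_subsetDown (w := Fintype.card α - 2 * n) (n := n) ?_ ?_
      (fun t => (-1) ^ (t - 1) * ((n - t).choose (n - k) : K) / (t.factorial : K) ^ 2) ?_ ?_
    · ext1 S
      rw [subsetWeight_apply, Pi.smul_apply]
      by_cases h : #S = n
      · rw [h, Nat.cast_sub hn]
        push_cast
        rfl
      · simp [hθ S h]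
    · ext1 S
      rw [subsetUp_pow_apply, sum_eq_zero, smul_zero, Pi.zero_apply]
      intro A hA
      apply hθ
      have h1 := (mem_powersetCard.1 hA).2
      have h2 := card_le_card (subset_union_right (s₁ := S) (s₂ := A))
      omega
    · ext1 S
      by_cases h : #S = n
      · have h1 := choose_smul_sub_sum_exchangeSum (K := K) θ S (k := k) (h ▸ hk)
        rw [h, hrel S h, sub_self] at h1
        simp only [Finset.sum_apply, Pi.smul_apply, Pi.zero_apply]
        exact h1.symm
      · simp only [Finset.sum_apply, Pi.smul_apply, Pi.zero_apply]
        refine sum_eq_zero fun t _ => ?_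
        rw [subsetDown_pow_apply, sum_eq_zero, smul_zero, smul_zero]
        intro B hB
        rw [subsetUp_pow_apply, sum_eq_zero, smul_zero]
        intro A hA
        apply hθ
        rw [mem_powersetCard, subset_compl_iff_disjoint_left] at hA
        rw [mem_powersetCard] at hB
        rw [card_union_of_disjoint hA.1, hA.2, card_sdiff_of_subset hB.1, hB.2]
        have := card_le_card hB.1
        omega
    · intro j hj hjn
      convert hcond j hj hjn using 1
      refine sum_congr rfl fun t _ => ?_
      have hf : (t.factorial : K) ≠ 0 := Nat.cast_ne_zero.2 (Nat.factorial_ne_zero _)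
      field_simp
  rw [neg_one_pow_smul_exchangeSum θ hB, ← sum_erase_add _ _ (empty_mem_powerset B), sum_eq_zero]
  · simp
  · intro B' hB'
    rw [mem_erase] at hB'
    have h1 := subsetUp_pow_apply (K := K) #B' θ (S \ B')
    obtain ⟨s, hs⟩ := Nat.exists_eq_succ_of_ne_zero (card_ne_zero.2 (nonempty_iff_ne_empty.2 hB'.1))
    rw [hs, pow_succ, Module.End.mul_apply, hup, map_zero, Pi.zero_apply, ← hs] at h1
    rw [(smul_eq_zero.1 h1.symm).resolve_left (Nat.cast_ne_zero.2 (Nat.factorial_ne_zero _)),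
      smul_zero]

end Boolean

section Permutations

open Finset

theorem Finset.exists_perm_map_eq {α : Type*} [Fintype α] [DecidableEq α] {s t : Finset α}
    (h : #s = #t) : ∃ π : Equiv.Perm α, s.map π.toEmbedding = t := by
  let e : {x // x ∈ s} ≃ {x // x ∈ t} := Finset.equivOfCardEq h
  refine ⟨e.extendSubtype, eq_of_subset_of_card_le (fun x hx => ?_) (by simp [h])⟩
  obtain ⟨y, hy, rfl⟩ := mem_map.1 hx
  exact e.extendSubtype_mem y hy

theorem Finset.exists_perm_map_eq_and_map_eq {α : Type*} [Fintype α] [DecidableEq α]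
    {s t U : Finset α} (h : #s = #t) (hs : s ⊆ U) (ht : t ⊆ U) :
    ∃ π : Equiv.Perm α, U.map π.toEmbedding = U ∧ s.map π.toEmbedding = t := by
  obtain ⟨σ, hσ⟩ := exists_perm_map_eq (s := s.subtype (· ∈ U)) (t := t.subtype (· ∈ U))
    (by rw [card_subtype, card_subtype, filter_true_of_mem (fun x hx => hs hx),
      filter_true_of_mem (fun x hx => ht hx), h])
  refine ⟨Equiv.Perm.ofSubtype σ, eq_of_subset_of_card_le (fun x hx => ?_) (by simp),
    eq_of_subset_of_card_le (fun x hx => ?_) (by simp [h])⟩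
  · obtain ⟨y, hy, rfl⟩ := mem_map.1 hx
    rw [Equiv.coe_toEmbedding, Equiv.Perm.ofSubtype_apply_of_mem σ hy]
    exact (σ ⟨y, hy⟩).2
  · obtain ⟨y, hy, rfl⟩ := mem_map.1 hx
    rw [Equiv.coe_toEmbedding, Equiv.Perm.ofSubtype_apply_of_mem σ (hs hy)]
    have h1 : σ ⟨y, hs hy⟩ ∈ t.subtype (· ∈ U) := by
      rw [← hσ]
      exact mem_map_of_mem σ.toEmbedding (mem_subtype.2 hy)
    exact mem_subtype.1 h1

/-- A function of permutations invariant under the transpositions preserving `U` only depends on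
the image of `U`. -/
theorem Finset.exists_map_perm_eq {α Q : Type*} [Fintype α] [DecidableEq α] [Zero Q]
    (U : Finset α) (f : Equiv.Perm α → Q)
    (hf : ∀ π x y, x ≠ y → (x ∈ U ↔ y ∈ U) → f (π * Equiv.swap x y) = f π) :
    ∃ θ : Finset α → Q, (∀ S, #S ≠ #U → θ S = 0) ∧
      ∀ π : Equiv.Perm α, θ (U.map π.toEmbedding) = f π := by
  have key : ∀ (N : ℕ) (σ π : Equiv.Perm α), #σ.support = N → (∀ x, x ∈ U ↔ σ x ∈ U) →
      f (π * σ) = f π := by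
    intro N
    induction N using Nat.strong_induction_on with
    | _ N ih =>
      intro σ π hN hσ
      by_cases h1 : σ = 1
      · rw [h1, mul_one]
      obtain ⟨x, hx⟩ : ∃ x, σ x ≠ x := by
        by_contra! h
        exact h1 (Equiv.ext h)
      have h2 : σ = Equiv.swap x (σ x) * (Equiv.swap x (σ x) * σ) := by
        rw [← mul_assoc, Equiv.swap_mul_self, one_mul]
      rw [h2, ← mul_assoc, ih _ (hN ▸ Equiv.Perm.card_support_swap_mul hx) _ _ rfl,
        hf π x (σ x) hx.symm (hσ x)]
      intro y
      rw [hσ y, Equiv.Perm.mul_apply, Equiv.swap_apply_def]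
      split_ifs with h3 h4
      · rw [h3, ← hσ x]
      · rw [h4, ← hσ x]
      · rfl
  classical
  refine ⟨fun S => if h : ∃ π : Equiv.Perm α, U.map π.toEmbedding = S then f h.choose else 0,
    fun S hS => dif_neg ?_, fun π => ?_⟩
  · rintro ⟨π, rfl⟩
    exact hS (card_map _)
  · have h : ∃ τ : Equiv.Perm α, U.map τ.toEmbedding = U.map π.toEmbedding := ⟨π, rfl⟩
    simp only
    rw [dif_pos h, ← key _ (h.choose⁻¹ * π) h.choose rfl, mul_inv_cancel_left]
    intro x
    have h1 : π x ∈ U.map h.choose.toEmbedding ↔ x ∈ U := by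
      rw [h.choose_spec, mem_map_equiv, Equiv.symm_apply_apply]
    rw [← h1, mem_map_equiv]
    rfl

/-- The product of the transpositions of `f i` and `g i`. -/
def Equiv.Perm.exchange {α : Type*} [DecidableEq α] {k : ℕ} (f g : Fin k → α) : Equiv.Perm α :=
  (List.ofFn fun i => Equiv.swap (f i) (g i)).prod

namespace Equiv.Perm

variable {α : Type*} [DecidableEq α] {k : ℕ} {f g : Fin k → α}

theorem exchange_zero (f g : Fin 0 → α) : exchange f g = 1 := by
  simp [exchange]

theorem exchange_succ (f g : Fin (k + 1) → α) :
    exchange f g = Equiv.swap (f 0) (g 0) * exchange (fun i => f i.succ) fun i => g i.succ := by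
  simp [exchange, List.ofFn_succ]

theorem exchange_apply_of_ne {x : α} (hf : ∀ i, x ≠ f i) (hg : ∀ i, x ≠ g i) :
    exchange f g x = x := by
  induction k with
  | zero => rw [exchange_zero, one_apply]
  | succ k ih =>
    rw [exchange_succ, mul_apply, ih (fun i => hf i.succ) (fun i => hg i.succ),
      Equiv.swap_apply_of_ne_of_ne (hf 0) (hg 0)]

theorem exchange_apply_right (hf : f.Injective) (hg : g.Injective) (hfg : ∀ i j, f i ≠ g j)
    (i : Fin k) : exchange f g (g i) = f i := by
  induction k with
  | zero => exact i.elim0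
  | succ k ih =>
    rw [exchange_succ, mul_apply]
    cases i using Fin.cases with
    | zero =>
      rw [exchange_apply_of_ne (fun j => (hfg _ _).symm) fun j h => Fin.succ_ne_zero j (hg h).symm,
        Equiv.swap_apply_right]
    | succ i =>
      have h : exchange (fun i => f i.succ) (fun i => g i.succ) (g i.succ) = f i.succ :=
        ih (f := fun i => f i.succ) (g := fun i => g i.succ) (hf.comp (Fin.succ_injective k))
          (hg.comp (Fin.succ_injective k)) (fun i j => hfg i.succ j.succ) i
      rw [h, Equiv.swap_apply_of_ne_of_ne (fun h' => Fin.succ_ne_zero i (hf h')) (hfg _ _)]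

theorem sign_exchange [Fintype α] (hfg : ∀ i j, f i ≠ g j) : sign (exchange f g) = (-1) ^ k := by
  induction k with
  | zero => simp [exchange_zero]
  | succ k ih =>
    rw [exchange_succ, sign_mul, sign_swap (hfg 0 0), ih fun i j => hfg i.succ j.succ, pow_succ']

theorem map_exchange [Fintype α] (hf : f.Injective) (hg : g.Injective) (hfg : ∀ i j, f i ≠ g j)
    {U : Finset α} (hgU : ∀ i, g i ∈ U) (hfU : ∀ i, f i ∉ U) :
    U.map (exchange f g).toEmbedding = U \ univ.map ⟨g, hg⟩ ∪ univ.map ⟨f, hf⟩ := by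
  refine eq_of_subset_of_card_le (fun x hx => ?_) ?_
  · obtain ⟨y, hy, rfl⟩ := mem_map.1 hx
    rw [Equiv.coe_toEmbedding, mem_union, mem_sdiff]
    by_cases h : ∃ i, g i = y
    · obtain ⟨i, rfl⟩ := h
      rw [exchange_apply_right hf hg hfg]
      exact Or.inr (mem_map_of_mem ⟨f, hf⟩ (mem_univ i))
    · push Not at h
      rw [exchange_apply_of_ne (fun i hi => hfU i (by rwa [hi] at hy)) fun i => (h i).symm]
      refine Or.inl ⟨hy, fun h' => ?_⟩
      obtain ⟨i, -, hi⟩ := mem_map.1 h'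
      exact h i hi
  · refine (card_union_le _ _).trans ?_
    have h1 : univ.map ⟨g, hg⟩ ⊆ U := fun x hx => by
      obtain ⟨i, -, rfl⟩ := mem_map.1 hx
      exact hgU i
    have h2 := card_le_card h1
    rw [card_sdiff_of_subset h1]
    simp only [card_map, card_univ, Fintype.card_fin] at h2 ⊢
    omega

theorem ofSubtype_exchange {p : α → Prop} [DecidablePred p] (f g : Fin k → Subtype p) :
    ofSubtype (exchange f g) = exchange (fun i => (f i : α)) fun i => (g i : α) := by
  simp only [exchange, map_list_prod, List.map_ofFn, Function.comp_def, ofSubtype_swap_eq]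

end Equiv.Perm

end Permutations

namespace Specht

section Columns

open Finset

variable {L : ℕ} (μ : Fin L → ℕ) (c : ℕ) (hc : c + 1 < L)

/-- The cells in the columns `c` and `c + 1`. -/
abbrev ColPair : Type := {x : Cell μ // x.1 = ⟨c, by omega⟩ ∨ x.1 = ⟨c + 1, hc⟩}

/-- The inclusion of column `c`. -/
def leftCell : Fin (μ ⟨c, by omega⟩) ↪ ColPair μ c hc where
  toFun i := ⟨⟨⟨c, by omega⟩, i⟩, Or.inl rfl⟩
  inj' i j h := by simpa using h

/-- The inclusion of column `c + 1`. -/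
def rightCell : Fin (μ ⟨c + 1, hc⟩) ↪ ColPair μ c hc where
  toFun i := ⟨⟨⟨c + 1, hc⟩, i⟩, Or.inr rfl⟩
  inj' i j h := by simpa using h

/-- The set of cells in column `c + 1`. -/
def rightCol : Finset (ColPair μ c hc) := univ.map (rightCell μ c hc)

theorem mem_rightCol {x : ColPair μ c hc} : x ∈ rightCol μ c hc ↔ x.1.1 = ⟨c + 1, hc⟩ := by
  rw [rightCol, mem_map]
  constructor
  · rintro ⟨i, -, rfl⟩
    rfl
  · obtain ⟨⟨d, i⟩, hx⟩ := x
    intro h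
    subst h
    exact ⟨i, mem_univ _, rfl⟩

theorem card_rightCol : #(rightCol μ c hc) = μ ⟨c + 1, hc⟩ := by
  simp [rightCol]

theorem rightCell_mem (i) : rightCell μ c hc i ∈ rightCol μ c hc :=
  mem_map_of_mem _ (mem_univ i)

theorem leftCell_notMem (i) : leftCell μ c hc i ∉ rightCol μ c hc := by
  rw [mem_rightCol]
  intro h
  have h1 : c = c + 1 := congrArg Fin.val h
  omega

theorem leftCell_ne_rightCell (i j) : leftCell μ c hc i ≠ rightCell μ c hc j := fun h =>
  leftCell_notMem μ c hc i (h ▸ rightCell_mem μ c hc j)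

theorem compl_rightCol : (rightCol μ c hc)ᶜ = univ.map (leftCell μ c hc) := by
  ext x
  rw [mem_compl]
  constructor
  · obtain ⟨⟨d, i⟩, hx⟩ := x
    intro h
    rw [mem_rightCol] at h
    obtain rfl := hx.resolve_right h
    exact mem_map_of_mem (leftCell μ c hc) (mem_univ i)
  · rw [mem_map]
    rintro ⟨i, -, rfl⟩
    exact leftCell_notMem μ c hc i

theorem card_colPair :
    Fintype.card (ColPair μ c hc) = μ ⟨c, by omega⟩ + μ ⟨c + 1, hc⟩ := by
  have h1 := card_compl (rightCol μ c hc)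
  have h2 := card_le_univ (rightCol μ c hc)
  rw [compl_rightCol, card_map, card_univ, Fintype.card_fin, card_rightCol] at h1
  rw [card_rightCol] at h2
  omega

variable (K : Type) [Field K] (r : ℕ)

variable {μ r} in
theorem tabloid_swap (T : Tab μ r) {x y : Cell μ} (hxy : x ≠ y) (h : x.1 = y.1) :
    tabloid K μ r ((Equiv.swap x y).trans T) = -tabloid K μ r T := by
  obtain ⟨d, i⟩ := x
  obtain ⟨d', j⟩ := y
  obtain rfl : d = d' := h
  rw [eq_neg_iff_add_eq_zero, add_comm]
  exact (Submodule.Quotient.mk_eq_zero (colRel K μ r)).2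
    (Submodule.subset_span ⟨T, d, i, j, by rintro rfl; exact hxy rfl, rfl⟩)

variable {μ c hc r K} in
/-- `θ` computes, up to the sign, the column tabloids of the rearrangements of the columns `c` and
`c + 1` of `T` from their sets of entries in column `c + 1`. -/
def Represents (T : Tab μ r) (θ : Finset (ColPair μ c hc) → MLam K μ r) : Prop :=
  ∀ π : Equiv.Perm (ColPair μ c hc), tabloid K μ r ((Equiv.Perm.ofSubtype π).trans T) =
    Equiv.Perm.sign π • θ ((rightCol μ c hc).map π.toEmbedding)

variable {μ r} in
theorem exists_represents (T : Tab μ r) :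
    ∃ θ : Finset (ColPair μ c hc) → MLam K μ r, (∀ S, #S ≠ μ ⟨c + 1, hc⟩ → θ S = 0) ∧
      Represents T θ := by
  obtain ⟨θ, h1, h2⟩ := exists_map_perm_eq (rightCol μ c hc) (fun π : Equiv.Perm (ColPair μ c hc) =>
    Equiv.Perm.sign π • tabloid K μ r ((Equiv.Perm.ofSubtype π).trans T)) (by
      intro π x y hxy h
      have h3 : (Equiv.Perm.ofSubtype (π * Equiv.swap x y)).trans T =
          (Equiv.swap (x : Cell μ) y).trans ((Equiv.Perm.ofSubtype π).trans T) := by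
        rw [map_mul, Equiv.Perm.ofSubtype_swap_eq]
        rfl
      rw [h3, tabloid_swap K _ (fun h => hxy (Subtype.ext h)), Equiv.Perm.sign_mul,
        Equiv.Perm.sign_swap hxy]
      · simp
      · rw [mem_rightCol, mem_rightCol] at h
        have hx := x.2
        have hy := y.2
        by_cases h4 : x.1.1 = ⟨c + 1, hc⟩
        · rw [h4, h.1 h4]
        · rw [hx.resolve_right h4, hy.resolve_right fun h5 => h4 (h.2 h5)])
  refine ⟨θ, fun S hS => h1 S (by rwa [card_rightCol]), fun π => ?_⟩
  rw [h2, smul_smul, Int.units_mul_self, one_smul]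

variable {μ c hc r K} {T : Tab μ r} {θ : Finset (ColPair μ c hc) → MLam K μ r}

theorem exchangeSum_map (π : Equiv.Perm (ColPair μ c hc)) (B : Finset (Fin (μ ⟨c + 1, hc⟩))) :
    exchangeSum θ ((rightCol μ c hc).map π.toEmbedding)
        ((B.map (rightCell μ c hc)).map π.toEmbedding) =
      ∑ A ∈ powersetCard #B univ, θ ((rightCol μ c hc \ B.map (rightCell μ c hc) ∪
        A.map (leftCell μ c hc)).map π.toEmbedding) := by
  have h : ((rightCol μ c hc).map π.toEmbedding)ᶜ = (univ.map (leftCell μ c hc)).map π.toEmbedding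
      := by
    rw [← compl_rightCol]
    ext x
    simp [mem_map_equiv]
  rw [exchangeSum, h, powersetCard_map, powersetCard_map, sum_map, sum_map, card_map, card_map]
  refine sum_congr rfl fun A _ => ?_
  rw [map_union, Finset.map_sdiff]
  rfl

theorem map_orderIsoOfFin_univ {n k : ℕ} {A : Finset (Fin n)} (hA : #A = k) :
    univ.map ((A.orderIsoOfFin hA).toEquiv.toEmbedding.trans (Function.Embedding.subtype _)) =
      A := by
  ext x
  simp only [mem_map, mem_univ, true_and]
  constructor
  · rintro ⟨i, rfl⟩
    exact (A.orderIsoOfFin hA i).2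
  · exact fun hx => ⟨(A.orderIsoOfFin hA).symm ⟨x, hx⟩, by simp⟩

theorem tabloid_exchange (hθ : Represents T θ) (π : Equiv.Perm (ColPair μ c hc)) {k : ℕ}
    (a : Fin k ↪ Fin (μ ⟨c, by omega⟩)) (b : Fin k ↪ Fin (μ ⟨c + 1, hc⟩)) :
    tabloid K μ r ((Equiv.Perm.exchange (fun i => (⟨⟨c, by omega⟩, a i⟩ : Cell μ))
        fun i => ⟨⟨c + 1, hc⟩, b i⟩).trans ((Equiv.Perm.ofSubtype π).trans T)) =
      Equiv.Perm.sign π • (-1 : ℤ) ^ k • θ ((rightCol μ c hc \ (univ.map b).map (rightCell μ c hc) ∪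
        (univ.map a).map (leftCell μ c hc)).map π.toEmbedding) := by
  have h1 := hθ (π * Equiv.Perm.exchange (fun i => leftCell μ c hc (a i))
    fun i => rightCell μ c hc (b i))
  have hne : ∀ i j, leftCell μ c hc (a i) ≠ rightCell μ c hc (b j) := fun i j =>
    leftCell_ne_rightCell μ c hc _ _
  have h2 := Equiv.Perm.map_exchange ((leftCell μ c hc).injective.comp a.injective)
    ((rightCell μ c hc).injective.comp b.injective) hne
    (fun i => rightCell_mem μ c hc _) (fun i => leftCell_notMem μ c hc _)
  have h3 : ∀ σ : Equiv.Perm (ColPair μ c hc), (rightCol μ c hc).map (π * σ).toEmbedding =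
      ((rightCol μ c hc).map σ.toEmbedding).map π.toEmbedding := fun σ => by
    rw [map_map]
    rfl
  rw [h3, map_mul, Equiv.Perm.ofSubtype_exchange, Equiv.Perm.sign_mul,
    Equiv.Perm.sign_exchange hne, mul_smul] at h1
  refine h1.trans ?_
  have ha : (univ.map a).map (leftCell μ c hc) =
      univ.map ⟨_, (leftCell μ c hc).injective.comp a.injective⟩ := by
    rw [map_map]
    rfl
  have hb : (univ.map b).map (rightCell μ c hc) =
      univ.map ⟨_, (rightCell μ c hc).injective.comp b.injective⟩ := by
    rw [map_map]
    rfl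
  rw [ha, hb, Units.smul_def ((-1) ^ k : ℤˣ), Units.val_pow_eq_pow_val, Units.val_neg,
    Units.val_one]
  exact congrArg (fun s => Equiv.Perm.sign π • (-1 : ℤ) ^ k • θ (s.map π.toEmbedding)) h2

theorem garnirElt_eq (hθ : Represents T θ) (π : Equiv.Perm (ColPair μ c hc)) {k : ℕ}
    (hk : k ≤ μ ⟨c + 1, hc⟩) :
    garnirElt K μ r ((Equiv.Perm.ofSubtype π).trans T) c hc k hk =
      Equiv.Perm.sign π • (θ ((rightCol μ c hc).map π.toEmbedding) -
        (-1 : ℤ) ^ k • exchangeSum θ ((rightCol μ c hc).map π.toEmbedding)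
          (((univ.map (Fin.castLEEmb hk)).map (rightCell μ c hc)).map π.toEmbedding)) := by
  rw [garnirElt, hθ π, exchangeSum_map, smul_sub, smul_sum, smul_sum, card_map, card_univ,
    Fintype.card_fin, ← sum_attach (powersetCard k _)]
  congr 1
  refine sum_congr rfl fun A _ => ?_
  have h := tabloid_exchange hθ π
    ((A.1.orderIsoOfFin (mem_powersetCard.1 A.2).2).toEquiv.toEmbedding.trans
      (Function.Embedding.subtype _)) (Fin.castLEEmb hk)
  rw [map_orderIsoOfFin_univ] at h
  exact h

theorem sgrElt_eq (hθ : Represents T θ) (π : Equiv.Perm (ColPair μ c hc)) (k : ℕ) :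
    sgrElt K μ r ((Equiv.Perm.ofSubtype π).trans T) c hc k =
      Equiv.Perm.sign π • (((μ ⟨c + 1, hc⟩).choose k : K) • θ ((rightCol μ c hc).map π.toEmbedding) -
        (-1 : ℤ) ^ k • ∑ B ∈ powersetCard k ((rightCol μ c hc).map π.toEmbedding),
          exchangeSum θ ((rightCol μ c hc).map π.toEmbedding) B) := by
  have h0 : ∑ B ∈ powersetCard k ((rightCol μ c hc).map π.toEmbedding),
      exchangeSum θ ((rightCol μ c hc).map π.toEmbedding) B = ∑ B ∈ powersetCard k univ,
      ∑ A ∈ powersetCard k univ, θ ((rightCol μ c hc \ B.map (rightCell μ c hc) ∪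
        A.map (leftCell μ c hc)).map π.toEmbedding) := by
    conv_lhs => rw [rightCol, powersetCard_map, powersetCard_map, sum_map, sum_map]
    refine sum_congr rfl fun B hB => ?_
    rw [← (mem_powersetCard.1 hB).2]
    exact exchangeSum_map π B
  rw [sgrElt, hθ π, h0, smul_sub, sum_comm, smul_comm (Equiv.Perm.sign π) (_ : K), smul_sum,
    smul_sum, ← sum_attach (powersetCard k _)]
  congr 1
  refine sum_congr rfl fun B _ => ?_
  rw [smul_sum, smul_sum, ← sum_attach (powersetCard k _)]
  refine sum_congr rfl fun A _ => ?_
  have h := tabloid_exchange hθ π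
    ((A.1.orderIsoOfFin (mem_powersetCard.1 A.2).2).toEquiv.toEmbedding.trans
      (Function.Embedding.subtype _))
    ((B.1.orderIsoOfFin (mem_powersetCard.1 B.2).2).toEquiv.toEmbedding.trans
      (Function.Embedding.subtype _))
  rw [map_orderIsoOfFin_univ, map_orderIsoOfFin_univ] at h
  exact h

end Columns

section Comparison

open Finset

variable {K : Type} [Field K] {L r : ℕ} {μ : Fin L → ℕ} {kk : ℕ → ℕ}

theorem exchangeSum_comp_mkQ {R α M : Type*} [Ring R] [AddCommGroup M] [Module R M] [Fintype α]
    [DecidableEq α] (N : Submodule R M) (θ : Finset α → M) (S B : Finset α) :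
    exchangeSum (fun S => N.mkQ (θ S)) S B = N.mkQ (exchangeSum θ S B) :=
  (map_sum N.mkQ _ _).symm

theorem garnirElt_mem_sgrSub [CharZero K] (hanti : ∀ i j : Fin L, i ≤ j → μ j ≤ μ i)
    (T : Tab μ r) {c : ℕ} (hc : c + 1 < L) (hkc : kk c ≤ μ ⟨c + 1, hc⟩)
    (hcond : ∀ j : ℕ, 1 ≤ j → j ≤ μ ⟨c + 1, hc⟩ →
      (∑ t ∈ Finset.Icc 1 j,
        (-1 : K) ^ (t - 1) * ((μ ⟨c + 1, hc⟩ - t).choose (μ ⟨c + 1, hc⟩ - kk c) : K) *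
          (j.choose t : K) *
          ((μ ⟨c, by omega⟩ - μ ⟨c + 1, hc⟩ + j + t).choose t : K)) ≠ 0)
    {k : ℕ} (hk : k ≤ μ ⟨c + 1, hc⟩) :
    garnirElt K μ r T c hc k hk ∈ sgrSub K μ r kk := by
  obtain ⟨θ, h0, hθ⟩ := exists_represents c hc K T
  have hle : μ ⟨c + 1, hc⟩ ≤ μ ⟨c, by omega⟩ := hanti _ _ (Fin.mk_le_mk.2 (Nat.le_succ c))
  have hsub : Fintype.card (ColPair μ c hc) - 2 * μ ⟨c + 1, hc⟩ =
      μ ⟨c, by omega⟩ - μ ⟨c + 1, hc⟩ := by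
    rw [card_colPair]
    omega
  have key := eq_neg_one_pow_smul_exchangeSum (K := K) (n := μ ⟨c + 1, hc⟩) (k := kk c)
    (fun S => (sgrSub K μ r kk).mkQ (θ S)) (fun S hS => by rw [h0 S hS, map_zero])
    (by rw [card_colPair]; omega) hkc ?_ (by rw [hsub]; exact hcond)
    (S := rightCol μ c hc) (B := (univ.map (Fin.castLEEmb hk)).map (rightCell μ c hc))
    (card_rightCol μ c hc) (map_subset_map.2 (subset_univ _))
  · have h := garnirElt_eq hθ 1 hk
    have h1 : ∀ s : Finset (ColPair μ c hc),
        s.map (1 : Equiv.Perm (ColPair μ c hc)).toEmbedding = s := fun s => map_refl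
    rw [map_one, h1, h1, Equiv.Perm.sign_one, one_smul] at h
    rw [exchangeSum_comp_mkQ, card_map, card_map, card_univ, Fintype.card_fin, ← map_zsmul,
      ← sub_eq_zero, ← map_sub, ← h, Submodule.mkQ_apply, Submodule.Quotient.mk_eq_zero] at key
    exact key
  · intro S hS
    obtain ⟨π, rfl⟩ := exists_perm_map_eq ((card_rightCol μ c hc).trans hS.symm)
    have h : sgrElt K μ r ((Equiv.Perm.ofSubtype π).trans T) c hc (kk c) ∈ sgrSub K μ r kk :=
      Submodule.subset_span ⟨_, c, hc, rfl⟩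
    rw [sgrElt_eq hθ, Units.smul_def] at h
    rw [← Submodule.Quotient.mk_eq_zero, ← Submodule.mkQ_apply, map_zsmul] at h
    have h1 := congrArg (fun x => Equiv.Perm.sign π • x) h
    simp only [Units.smul_def, smul_smul, smul_zero] at h1
    rw [← Units.val_mul, Int.units_mul_self, Units.val_one, one_smul, map_sub, map_zsmul, map_sum,
      map_smul, sub_eq_zero] at h1
    simp only [exchangeSum_comp_mkQ]
    exact h1

theorem sgrElt_mem_garnirSub (T : Tab μ r) {c : ℕ} (hc : c + 1 < L) {k : ℕ}
    (hk : k ≤ μ ⟨c + 1, hc⟩) :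
    sgrElt K μ r T c hc k ∈ garnirSub K μ r := by
  obtain ⟨θ, -, hθ⟩ := exists_represents c hc K T
  have h := sgrElt_eq hθ 1 k
  have h1 : ∀ s : Finset (ColPair μ c hc),
      s.map (1 : Equiv.Perm (ColPair μ c hc)).toEmbedding = s := fun s => map_refl
  rw [map_one, h1, Equiv.Perm.sign_one, one_smul] at h
  have h2 : sgrElt K μ r T c hc k = ∑ B ∈ powersetCard k (rightCol μ c hc),
      (θ (rightCol μ c hc) - (-1 : ℤ) ^ k • exchangeSum θ (rightCol μ c hc) B) := by
    refine h.trans ?_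
    rw [sum_sub_distrib, sum_const, card_powersetCard, card_rightCol, smul_sum,
      Nat.cast_smul_eq_nsmul K]
  rw [h2]
  refine Submodule.sum_mem _ fun B hB => ?_
  rw [mem_powersetCard] at hB
  obtain ⟨π, hπ, hπB⟩ := exists_perm_map_eq_and_map_eq
    (s := (univ.map (Fin.castLEEmb hk)).map (rightCell μ c hc)) (t := B) (U := rightCol μ c hc)
    (by simp [hB.2]) (map_subset_map.2 (subset_univ _)) hB.1
  have h3 : garnirElt K μ r ((Equiv.Perm.ofSubtype π).trans T) c hc k hk ∈ garnirSub K μ r :=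
    Submodule.subset_span ⟨_, c, hc, k, hk, rfl⟩
  rw [garnirElt_eq hθ, hπ, hπB, Units.smul_def] at h3
  have h4 := Submodule.smul_of_tower_mem _ (Equiv.Perm.sign π : ℤ) h3
  rwa [smul_smul, ← Units.val_mul, Int.units_mul_self, Units.val_one, one_smul] at h4

theorem map_sgrElt {ρ : Equiv.Perm (Fin r) → (MLam K μ r →ₗ[K] MLam K μ r)}
    (hρ : IsTabAction K μ r ρ) (σ : Equiv.Perm (Fin r)) (T : Tab μ r) (c : ℕ) (hc : c + 1 < L)
    (k : ℕ) : ρ σ (sgrElt K μ r T c hc k) = sgrElt K μ r (T.trans σ) c hc k := by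
  simp only [sgrElt, map_sub, map_smul, map_sum, hρ σ, Equiv.trans_assoc]

theorem map_mem_sgrSub {ρ : Equiv.Perm (Fin r) → (MLam K μ r →ₗ[K] MLam K μ r)}
    (hρ : IsTabAction K μ r ρ) (σ : Equiv.Perm (Fin r)) {x : MLam K μ r}
    (hx : x ∈ sgrSub K μ r kk) : ρ σ x ∈ sgrSub K μ r kk := by
  have h : sgrSub K μ r kk ≤ (sgrSub K μ r kk).comap (ρ σ) := by
    refine Submodule.span_le.2 ?_
    rintro _ ⟨T, c, hc, rfl⟩
    rw [SetLike.mem_coe, Submodule.mem_comap, map_sgrElt hρ]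
    exact Submodule.subset_span ⟨_, c, hc, rfl⟩
  exact h hx

end Comparison

/-- Theorem 6.2 of the paper: let `λ` be a partition of `r` with conjugate `μ`, and let
`k_1, …, k_{λ_1−1}` be positive integers with `k_c ≤ μ_{c+1}`. If
`Σ_{t=1}^{j} (−1)^{t−1} C(μ_{c+1}−t, μ_{c+1}−k_c) C(j,t) C(μ_c−μ_{c+1}+j+t, t) ≠ 0`
for all `c` and all `1 ≤ j ≤ μ_{c+1}`, then `M^λ / SGR^λ(k_1,…,k_{λ_1−1}) ≅ S^λ` as
`𝔖_r`-modules; equivalently `SGR^λ(k_1,…,k_{λ_1−1}) = G^λ` as subspaces of `M^λ`. -/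
theorem statement13 (K : Type) [Field K] [CharZero K] (L r : ℕ) (μ : Fin L → ℕ)
    (hpos : ∀ i, 0 < μ i) (hanti : ∀ i j : Fin L, i ≤ j → μ j ≤ μ i)
    (hr : r = ∑ i, μ i)
    (kk : ℕ → ℕ)
    (hk : ∀ (c : ℕ) (hc : c + 1 < L), 1 ≤ kk c ∧ kk c ≤ μ ⟨c+1, hc⟩)
    (ρ : Equiv.Perm (Fin r) → (MLam K μ r →ₗ[K] MLam K μ r))
    (hρ : IsTabAction K μ r ρ)
    (hcond : ∀ (c : ℕ) (hc : c + 1 < L) (j : ℕ), 1 ≤ j → j ≤ μ ⟨c+1, hc⟩ →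
      (∑ t ∈ Finset.Icc 1 j,
        (-1:K)^(t-1) * ((μ ⟨c+1, hc⟩ - t).choose (μ ⟨c+1, hc⟩ - kk c) : K) *
          (j.choose t : K) *
          ((μ ⟨c, by omega⟩ - μ ⟨c+1, hc⟩ + j + t).choose t : K)) ≠ 0) :
    IsQuotIso K (sgrSub K μ r kk) (garnirSub K μ r) ρ ρ ∧
      sgrSub K μ r kk = garnirSub K μ r := by
  have heq : sgrSub K μ r kk = garnirSub K μ r := by
    refine le_antisymm (Submodule.span_le.2 ?_) (Submodule.span_le.2 ?_)
    · rintro _ ⟨T, c, hc, rfl⟩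
      exact sgrElt_mem_garnirSub T hc (hk c hc).2
    · rintro _ ⟨T, c, hc, k, hkc, rfl⟩
      exact garnirElt_mem_sgrSub hanti T hc (hk c hc).2 (hcond c hc) hkc
  refine ⟨?_, heq⟩
  rw [← heq]
  refine ⟨LinearEquiv.refl K _, fun σ x y hxy => ?_⟩
  rw [LinearEquiv.refl_apply, Submodule.Quotient.eq] at hxy ⊢
  rw [← map_sub]
  exact map_mem_sgrSub hρ σ hxy

end Specht
end
end

section
/- Let a ≥ b ≥ k ≥ 1 and let λ = (a,b)' be the conjugate of (a,b) (so λ is the partition of r = a+b whose Young diagram has two columns of lengths a and b). Then M^λ / SGR^λ(k) ≅ S^λ as 𝔖_{a+b}-modules if and only if Σ_{t=1}^{j} (−1)^{t−1} C(b−t, b−k) C(j,t) C(a−b+j+t, t) ≠ 0 for all j = 1,…,b. -/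
set_option synthInstance.maxHeartbeats 1000000
set_option maxSynthPendingDepth 3
set_option maxHeartbeats 1000000

noncomputable section

namespace Johnson

open Finset Matrix

variable (K : Type*) [Field K] {α : Type*} [DecidableEq α]

/-- The `b`-element subsets of `α`. -/
abbrev Sub (α : Type*) (b : ℕ) : Type _ := {Y : Finset α // Y.card = b}

/-- The indicator function of the `b`-subsets containing `Z`. -/
def up (b : ℕ) (Z : Finset α) : Sub α b → K := fun W => if Z ⊆ W.1 then 1 else 0

/-- The span of the indicators `up b Z` with `Z` of cardinality less than `m`. -/
def filt (α : Type*) [DecidableEq α] (b m : ℕ) : Submodule K (Sub α b → K) :=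
  Submodule.span K {x | ∃ Z : Finset α, Z.card < m ∧ x = up K b Z}

/-- The matrix counting the common `(b - t)`-subsets of two `b`-subsets. -/
def incl (α : Type*) [DecidableEq α] (b t : ℕ) : Matrix (Sub α b) (Sub α b) K :=
  Matrix.of fun W Y => ((W.1 ∩ Y.1).card.choose (b - t) : K)

/-- The matrix `C(b, k) - (-1)^k A_k`, with `A_k` the `k`-th adjacency matrix of the
Johnson scheme. -/
def rel (α : Type*) [DecidableEq α] (b k : ℕ) : Matrix (Sub α b) (Sub α b) K :=
  Matrix.of fun W Y => (if W.1 = Y.1 then (b.choose k : K) else 0) -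
    (-1) ^ k * if (W.1 ∩ Y.1).card + k = b then 1 else 0

variable {K} {b : ℕ}

lemma up_mem_filt {m : ℕ} {Z : Finset α} (h : Z.card < m) : up K b Z ∈ filt K α b m :=
  Submodule.subset_span ⟨Z, h, rfl⟩

lemma filt_mono {m n : ℕ} (h : m ≤ n) : filt K α b m ≤ filt K α b n :=
  Submodule.span_mono fun _ ⟨Z, hZ, hx⟩ => ⟨Z, hZ.trans_le h, hx⟩

lemma incl_transpose (t : ℕ) : (incl K α b t)ᵀ = incl K α b t := by
  ext W Y
  simp [incl, Finset.inter_comm]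

lemma rel_transpose (k : ℕ) : (rel K α b k)ᵀ = rel K α b k := by
  ext W Y
  simp [rel, Finset.inter_comm, eq_comm]

/-- Summing over the `b`-subsets containing a given `(b-1)`-subset. -/
lemma sum_superset [Fintype α] (D : Finset α) (hD : D.card + 1 = b) (f : Finset α → K) :
    ∑ Y : Sub α b, (if D ⊆ Y.1 then f Y.1 else 0) = ∑ x ∈ Dᶜ, f (insert x D) := by
  rw [← Finset.sum_filter]
  symm
  refine Finset.sum_bij (fun x hx => (⟨insert x D, by
      rw [card_insert_of_notMem (by simpa using hx), hD]⟩ : Sub α b)) ?_ ?_ ?_ ?_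
  · intro x hx
    simp
  · intro x hx y hy h
    have h1 : insert x D = insert y D := congrArg Subtype.val h
    have h2 : x ∈ insert y D := h1 ▸ mem_insert_self x D
    rcases mem_insert.mp h2 with h3 | h3
    · exact h3
    · simp [h3] at hx
  · rintro ⟨Y, hY⟩ h
    have hDY : D ⊆ Y := by simpa using h
    have : (Y \ D).card = 1 := by rw [card_sdiff_of_subset hDY]; omega
    obtain ⟨x, hx⟩ := card_eq_one.mp this
    have hxm : x ∈ Y \ D := hx ▸ mem_singleton_self x
    refine ⟨x, by simpa using (mem_sdiff.mp hxm).2, ?_⟩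
    apply Subtype.ext
    change insert x D = Y
    rw [← union_sdiff_of_subset hDY, hx, union_comm]
    rfl
  · intro x hx
    rfl

lemma incl_one_apply (hb : 1 ≤ b) (W Y : Sub α b) :
    incl K α b 1 W Y = ∑ w ∈ W.1, if W.1.erase w ⊆ Y.1 then 1 else 0 := by
  obtain ⟨W, hW⟩ := W
  obtain ⟨Y, hY⟩ := Y
  have hsub : ∀ w, W.erase w ⊆ Y ↔ W \ Y ⊆ {w} := by
    intro w
    simp only [subset_iff, mem_erase, mem_sdiff, mem_singleton]
    grind
  have hc := card_sdiff_add_card_inter W Y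
  simp only [incl, of_apply, hsub]
  rcases Nat.lt_trichotomy (W \ Y).card 1 with h | h | h
  · have h0 : W \ Y = ∅ := by rw [← card_eq_zero]; omega
    have h1 : (W ∩ Y).card = b := by simp [h0] at hc; omega
    obtain ⟨b, rfl⟩ : ∃ c, b = c + 1 := ⟨b - 1, by omega⟩
    simp [h0, h1, hW]
  · obtain ⟨x, hx⟩ := card_eq_one.mp h
    have hxW : x ∈ W := (mem_sdiff.mp (hx ▸ mem_singleton_self x)).1
    have h1 : (W ∩ Y).card = b - 1 := by omega
    simp [hx, h1, hxW]
  · rw [Nat.choose_eq_zero_of_lt (by omega)]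
    symm
    push_cast
    refine sum_eq_zero fun w _ => if_neg fun h' => ?_
    have := card_le_card h'
    simp at this
    omega

lemma incl_one_mulVec [Fintype α] (hb : 1 ≤ b) (f : Finset α → K) (W : Sub α b) :
    (incl K α b 1 *ᵥ fun Y => f Y.1) W =
      ∑ w ∈ W.1, ∑ x ∈ (W.1.erase w)ᶜ, f (insert x (W.1.erase w)) := by
  simp only [mulVec, dotProduct, incl_one_apply hb, sum_mul, ite_mul, one_mul, zero_mul]
  rw [sum_comm]
  refine sum_congr rfl fun w hw => sum_superset _ ?_ f
  rw [card_erase_of_mem hw, W.2]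
  omega

lemma sum_insert_subset [Fintype α] (D Z : Finset α) :
    ∑ x ∈ Dᶜ, (if Z ⊆ insert x D then (1 : K) else 0) =
      ((Dᶜ.card : K) - Z.card) * (if Z ⊆ D then 1 else 0) +
        ∑ z ∈ Z, if Z.erase z ⊆ D then 1 else 0 := by
  have h1 : ∀ x ∈ Dᶜ, (if Z ⊆ insert x D then (1 : K) else 0) =
      (if Z ⊆ D then 1 else 0) +
        if x ∈ Z then (if Z.erase x ⊆ D then 1 else 0) - (if Z ⊆ D then 1 else 0) else 0 := by
    intro x hx
    simp only [← subset_insert_iff]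
    by_cases hxZ : x ∈ Z
    · simp [hxZ]
    · simp [hxZ, subset_insert_iff_of_notMem hxZ]
  rw [sum_congr rfl h1, sum_add_distrib, ← sum_filter (fun x => x ∈ Z)]
  have h2 : ∑ x ∈ Dᶜ with x ∈ Z, ((if Z.erase x ⊆ D then (1 : K) else 0) - if Z ⊆ D then 1 else 0)
      = ∑ x ∈ Z, ((if Z.erase x ⊆ D then (1 : K) else 0) - if Z ⊆ D then 1 else 0) := by
    refine sum_subset (fun x hx => (mem_filter.mp hx).2) fun x hx hx' => ?_
    have hxD : x ∈ D := by
      by_contra h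
      exact hx' (mem_filter.mpr ⟨mem_compl.mpr h, hx⟩)
    simp [← subset_insert_iff, insert_eq_of_mem hxD]
  rw [h2, sum_sub_distrib]
  simp only [sum_const, nsmul_eq_mul]
  ring

lemma sum_erase_superset (W Z : Finset α) :
    ∑ w ∈ W, (if Z ⊆ W.erase w then (1 : K) else 0) =
      ((W.card : K) - Z.card) * (if Z ⊆ W then 1 else 0) := by
  by_cases h : Z ⊆ W
  · have h1 : ∀ w ∈ W, (if Z ⊆ W.erase w then (1 : K) else 0) = 1 - if w ∈ Z then 1 else 0 := by
      intro w _
      have : Z ⊆ W.erase w ↔ w ∉ Z := by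
        rw [subset_erase]
        exact ⟨fun h => h.2, fun h' => ⟨h, h'⟩⟩
      by_cases hw : w ∈ Z <;> simp [this, hw]
    rw [sum_congr rfl h1, sum_sub_distrib, sum_ite_mem, inter_eq_right.mpr h]
    simp [h]
  · rw [if_neg h, mul_zero]
    exact sum_eq_zero fun w _ => if_neg fun h' => h (h'.trans (erase_subset _ _))

variable {a : ℕ}

lemma card_compl_erase [Fintype α] (hα : Fintype.card α = a + b) (W : Sub α b) {w : α} (hw : w ∈ W.1) :
    (W.1.erase w)ᶜ.card = a + 1 := by
  have h1 := card_erase_add_one hw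
  have h2 := W.2
  rw [card_compl, hα]
  omega

lemma incl_one_mulVec_up [Fintype α] (hα : Fintype.card α = a + b) (hb : 1 ≤ b) (Z : Finset α) :
    incl K α b 1 *ᵥ up K b Z =
      (((b : K) - Z.card) * ((a : K) - Z.card + 1)) • up K b Z +
        ((b : K) - Z.card + 1) • ∑ z ∈ Z, up K b (Z.erase z) := by
  ext W
  refine (incl_one_mulVec hb (fun Y => if Z ⊆ Y then (1 : K) else 0) W).trans ?_
  rw [sum_congr rfl fun w hw => (sum_insert_subset (W.1.erase w) Z).trans
    (by rw [card_compl_erase hα W hw])]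
  rw [sum_add_distrib, ← mul_sum, sum_erase_superset, sum_comm,
    sum_congr rfl fun z _ => sum_erase_superset W.1 (Z.erase z), W.2]
  simp only [Pi.add_apply, Pi.smul_apply, smul_eq_mul, Finset.sum_apply, up, mul_sum]
  congr 1
  · push_cast; ring
  · refine sum_congr rfl fun z hz => ?_
    have : (Z.card : K) = (Z.erase z).card + 1 := by
      rw [← card_erase_add_one hz]; push_cast; ring
    rw [this]
    ring

lemma sum_choose_insert [Fintype α] (D Y : Finset α) (u : ℕ) :
    ∑ x ∈ Dᶜ, (((insert x D) ∩ Y).card.choose (u + 1) : K) =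
      (Dᶜ.card : K) * ((D ∩ Y).card.choose (u + 1) : K) +
        ((Y.card : K) - (D ∩ Y).card) * ((D ∩ Y).card.choose u : K) := by
  have h1 : ∀ x ∈ Dᶜ, (((insert x D) ∩ Y).card.choose (u + 1) : K) =
      ((D ∩ Y).card.choose (u + 1) : K) + if x ∈ Y then ((D ∩ Y).card.choose u : K) else 0 := by
    intro x hx
    by_cases hxY : x ∈ Y
    · rw [insert_inter_of_mem hxY, card_insert_of_notMem (by simp at hx; simp [hx]),
        Nat.choose_succ_succ, if_pos hxY]
      push_cast; ring
    · rw [insert_inter_of_notMem hxY, if_neg hxY, add_zero]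
  rw [sum_congr rfl h1, sum_add_distrib, sum_ite_mem]
  have h2 : Dᶜ ∩ Y = Y \ D := by ext; simp [and_comm]
  have h3 := card_sdiff_add_card_inter Y D
  rw [inter_comm Y D] at h3
  have h4 : (Y.card : K) = (Y \ D).card + (D ∩ Y).card := by
    rw [← h3, Nat.cast_add]
  rw [h2, h4]
  simp

lemma incl_one_mul [Fintype α] (hα : Fintype.card α = a + b) (t : ℕ) (ht : t < b) :
    incl K α b 1 * incl K α b t =
      ((t : K) + 1) ^ 2 • incl K α b (t + 1) + ((t : K) * ((a : K) - b + t + 1)) • incl K α b t := by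
  obtain ⟨u, rfl⟩ : ∃ u, b = t + 1 + u := ⟨b - (t + 1), by omega⟩
  ext W Y
  have e1 : t + 1 + u - t = u + 1 := by omega
  have e2 : t + 1 + u - (t + 1) = u := by omega
  refine (incl_one_mulVec (by omega)
    (fun X => ((X ∩ Y.1).card.choose (t + 1 + u - t) : K)) W).trans ?_
  rw [e1, sum_congr rfl fun w hw => (sum_choose_insert (W.1.erase w) Y.1 u).trans
    (by rw [card_compl_erase hα W hw])]
  simp only [Matrix.add_apply, Matrix.smul_apply, smul_eq_mul, incl, of_apply, e1, e2]
  set s := (W.1 ∩ Y.1).card with hs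
  have hsplit : ∀ w ∈ W.1, (((a + 1 : ℕ) : K) * ((W.1.erase w ∩ Y.1).card.choose (u + 1) : K) +
        ((Y.1.card : K) - (W.1.erase w ∩ Y.1).card) * ((W.1.erase w ∩ Y.1).card.choose u : K)) =
      if w ∈ Y.1 then (((a + 1 : ℕ) : K) * ((s - 1).choose (u + 1) : K) +
        ((Y.1.card : K) - (s - 1 : ℕ)) * ((s - 1).choose u : K)) else
        (((a + 1 : ℕ) : K) * (s.choose (u + 1) : K) +
        ((Y.1.card : K) - s) * (s.choose u : K)) := by
    intro w hw
    by_cases hwY : w ∈ Y.1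
    · rw [if_pos hwY, erase_inter, card_erase_of_mem (mem_inter.mpr ⟨hw, hwY⟩)]
    · rw [if_neg hwY, erase_inter, erase_eq_of_notMem (by simp [hwY])]
  rw [sum_congr rfl hsplit, sum_ite, sum_const, sum_const, filter_mem_eq_inter, ← hs,
    filter_notMem_eq_sdiff, Y.2]
  have hd : ((W.1 \ Y.1).card : K) = (t + 1 + u : ℕ) - s := by
    have := card_sdiff_add_card_inter W.1 Y.1
    rw [W.2] at this
    rw [eq_sub_iff_add_eq, ← Nat.cast_add, this]
  rw [nsmul_eq_mul, nsmul_eq_mul, hd]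
  have r2 : ((s.choose (u + 1) : ℕ) : K) * (u + 1) = s.choose u * ((s : K) - u) := by
    rcases le_or_gt u s with h | h
    · have := Nat.choose_succ_right_eq s u
      rw [← Nat.cast_sub h]
      exact_mod_cast congrArg (Nat.cast (R := K)) this
    · rw [Nat.choose_eq_zero_of_lt h, Nat.choose_eq_zero_of_lt (by omega)]
      simp
  rcases Nat.eq_zero_or_pos s with h0 | h0
  · rw [h0] at r2 ⊢
    rcases Nat.eq_zero_or_pos u with hu | hu
    · subst hu
      simp
      ring
    · simp [Nat.choose_eq_zero_of_lt hu]
  · obtain ⟨s, hs'⟩ : ∃ c, s = c + 1 := ⟨s - 1, by omega⟩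
    rw [hs'] at r2 ⊢
    simp only [Nat.add_sub_cancel]
    have p : (((s + 1).choose (u + 1) : ℕ) : K) = s.choose u + s.choose (u + 1) := by
      rw [Nat.choose_succ_succ]; push_cast; ring
    have r1 : (((s + 1).choose (u + 1) : ℕ) : K) * (u + 1) = (s + 1) * s.choose u := by
      exact_mod_cast congrArg (Nat.cast (R := K)) (Nat.add_one_mul_choose_eq s u).symm
    push_cast at r2 ⊢
    have p' : ((s.choose (u + 1) : ℕ) : K) = (s + 1).choose (u + 1) - s.choose u := by
      rw [p]; ring
    rw [p']
    linear_combination (-((t : K) + 1 + u - s - a - 1)) * r1 + (2 * (t : K) + 1 + u - s) * r2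

lemma incl_zero : incl K α b 0 = 1 := by
  ext W Y
  simp only [incl, of_apply, Nat.sub_zero]
  by_cases h : W = Y
  · subst h
    simp [W.2]
  · rw [one_apply_ne h, Nat.choose_eq_zero_of_lt, Nat.cast_zero]
    refine lt_of_le_of_ne ((card_le_card inter_subset_left).trans_eq W.2) fun h' => h ?_
    have h1 : W.1 ∩ Y.1 = W.1 := eq_of_subset_of_card_le inter_subset_left (by rw [h', W.2])
    exact Subtype.ext (eq_of_subset_of_card_le (inter_eq_left.mp h1) (by rw [W.2, Y.2]))

/-- A linear map which is triangular on the indicators preserves the filtration. -/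
lemma map_filt_le {φ : (Sub α b → K) →ₗ[K] (Sub α b → K)} {e : ℕ → K} {m : ℕ}
    (h : ∀ Z : Finset α, Z.card < m → φ (up K b Z) - e Z.card • up K b Z ∈ filt K α b Z.card)
    {x : Sub α b → K} (hx : x ∈ filt K α b m) : φ x ∈ filt K α b m := by
  have : filt K α b m ≤ (filt K α b m).comap φ := by
    refine Submodule.span_le.mpr ?_
    rintro _ ⟨Z, hZ, rfl⟩
    have := add_mem (filt_mono hZ.le (h Z hZ))
      (Submodule.smul_mem _ (e Z.card) (up_mem_filt (K := K) (b := b) hZ))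
    simpa using this
  exact this hx

lemma incl_one_triangular [Fintype α] (hα : Fintype.card α = a + b) (hb : 1 ≤ b) (Z : Finset α) :
    incl K α b 1 *ᵥ up K b Z - (((b : K) - Z.card) * ((a : K) - Z.card + 1)) • up K b Z ∈
      filt K α b Z.card := by
  rw [incl_one_mulVec_up hα hb, add_sub_cancel_left]
  exact Submodule.smul_mem _ _ (sum_mem fun z hz => up_mem_filt (card_erase_lt_of_mem hz))

lemma incl_triangular [CharZero K] [Fintype α] (hα : Fintype.card α = a + b) (hba : b ≤ a)
    (t : ℕ) (ht : t ≤ b) (Z : Finset α) (hZ : Z.card ≤ b) :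
    incl K α b t *ᵥ up K b Z -
      (((b - Z.card).choose t : K) * ((a - Z.card + t).choose t : K)) • up K b Z ∈
      filt K α b Z.card := by
  induction t with
  | zero => simp [incl_zero]
  | succ t ih =>
    have ih := ih (by omega)
    set m := Z.card with hm
    obtain ⟨j, rfl⟩ : ∃ j, b = m + j := ⟨b - m, by omega⟩
    obtain ⟨n, rfl⟩ : ∃ n, a = m + n := ⟨a - m, by omega⟩
    simp only [Nat.add_sub_cancel_left] at ih ⊢
    set b := m + j with hb
    have hrec := congrArg (· *ᵥ up K b Z) (incl_one_mul (K := K) hα t (by omega))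
    simp only [← mulVec_mulVec, add_mulVec, smul_mulVec] at hrec
    have h1 := incl_one_triangular (K := K) hα (by omega) Z
    set e := ((j.choose t : K) * ((n + t).choose t : K)) with he
    set x := incl K α b t *ᵥ up K b Z - e • up K b Z with hx
    have hx' : incl K α b t *ᵥ up K b Z = x + e • up K b Z := by rw [hx, sub_add_cancel]
    set f : K := ((b : K) - Z.card) * (((m + n : ℕ) : K) - Z.card + 1) with hf
    set y := incl K α b 1 *ᵥ up K b Z - f • up K b Z with hy
    have hy' : incl K α b 1 *ᵥ up K b Z = y + f • up K b Z := by rw [hy, sub_add_cancel]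
    have h2 : incl K α b 1 *ᵥ x ∈ filt K α b m :=
      map_filt_le (φ := (incl K α b 1).mulVecLin)
      (e := fun i => ((b : K) - i) * (((m + n : ℕ) : K) - i + 1)) (fun Z _ =>
        incl_one_triangular (K := K) hα (by omega) Z) ih
    rw [hx', mulVec_add, mulVec_smul, hy'] at hrec
    have ht0 : ((t : K) + 1) ≠ 0 := by exact_mod_cast Nat.succ_ne_zero t
    have hcoef : ((t : K) + 1) ^ 2 * ((j.choose (t + 1) : K) * ((n + (t + 1)).choose (t + 1) : K)) =
        e * f - (t : K) * (((m + n : ℕ) : K) - b + t + 1) * e := by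
      have q1 : ((j.choose (t + 1) : ℕ) : K) * (t + 1) = j.choose t * ((j : K) - t) := by
        rcases le_or_gt t j with h | h
        · have := Nat.choose_succ_right_eq j t
          rw [← Nat.cast_sub h]
          exact_mod_cast congrArg (Nat.cast (R := K)) this
        · rw [Nat.choose_eq_zero_of_lt h, Nat.choose_eq_zero_of_lt (by omega)]
          simp
      have q2 : (((n + (t + 1)).choose (t + 1) : ℕ) : K) * (t + 1) =
          (n + t + 1) * (n + t).choose t := by
        exact_mod_cast congrArg (Nat.cast (R := K)) (Nat.add_one_mul_choose_eq (n + t) t).symm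
      rw [hf, he, hb, ← hm]
      push_cast
      linear_combination (((n + (t + 1)).choose (t + 1) : ℕ) : K) * (t + 1) * q1 +
        (j.choose t : K) * ((j : K) - t) * q2
    set g := ((j.choose (t + 1) : K) * ((n + (t + 1)).choose (t + 1) : K)) with hg
    set τ := (t : K) * (((m + n : ℕ) : K) - b + t + 1) with hτ
    have key : incl K α b (t + 1) *ᵥ up K b Z - g • up K b Z =
        (((t : K) + 1) ^ 2)⁻¹ • (incl K α b 1 *ᵥ x + e • y - τ • x) := by
      rw [eq_inv_smul_iff₀ (pow_ne_zero 2 ht0), smul_sub, smul_smul, hcoef,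
        eq_sub_of_add_eq hrec.symm]
      module
    rw [key]
    exact Submodule.smul_mem _ _ (sub_mem (add_mem h2 (Submodule.smul_mem _ _ h1))
      (Submodule.smul_mem _ _ ih))

variable (K) in
lemma alternating_sum_choose_mul (b s q : ℕ) (hs : s ≤ b) (hq : q ≤ b) :
    ∑ u ∈ range (b + 1), (-1 : K) ^ u * (u.choose q : K) * (s.choose u : K) =
      if s = q then (-1) ^ q else 0 := by
  have h1 : ∀ u ∈ range (b + 1), (-1 : K) ^ u * (u.choose q : K) * (s.choose u : K) =
      if q ≤ u then (s.choose q : K) * ((-1) ^ u * ((s - q).choose (u - q) : K)) else 0 := by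
    intro u _
    split_ifs with h
    · rcases le_or_gt u s with h' | h'
      · have := congrArg (Nat.cast (R := K)) (Nat.choose_mul (n := s) h)
        push_cast at this
        linear_combination (-1 : K) ^ u * this
      · rw [Nat.choose_eq_zero_of_lt h']
        rcases lt_or_ge s q with h'' | h''
        · simp [Nat.choose_eq_zero_of_lt h'']
        · simp [Nat.choose_eq_zero_of_lt (show s - q < u - q by omega)]
    · rw [Nat.choose_eq_zero_of_lt (by omega)]
      simp
  rw [sum_congr rfl h1]
  obtain ⟨c, rfl⟩ : ∃ c, b = q + c := ⟨b - q, by omega⟩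
  rw [add_assoc, sum_range_add, sum_eq_zero, zero_add]
  · simp only [le_add_iff_nonneg_right, zero_le, if_true, Nat.add_sub_cancel_left, pow_add]
    rw [← mul_sum]
    simp only [mul_assoc]
    rw [← mul_sum]
    rcases lt_or_ge s q with h | h
    · rw [Nat.choose_eq_zero_of_lt h, if_neg h.ne]
      simp
    · obtain ⟨d, rfl⟩ : ∃ d, s = q + d := ⟨s - q, by omega⟩
      have h2 := congrArg (Int.cast (R := K)) (Int.alternating_sum_range_choose (n := d))
      push_cast at h2
      rw [Nat.add_sub_cancel_left, ← sum_subset (range_subset_range.mpr (show d + 1 ≤ c + 1 by omega)),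
        h2]
      · by_cases hd : d = 0 <;> simp [hd]
      · intro i _ hi
        rw [Nat.choose_eq_zero_of_lt (by simpa using hi)]
        simp
  · intro u hu
    rw [if_neg (by simpa using hu)]

lemma rel_eq_sum {k : ℕ} (hk : k ≤ b) :
    rel K α b k = ∑ t ∈ Icc 1 b, ((-1) ^ (t - 1) * ((b - t).choose (b - k) : K)) • incl K α b t := by
  ext W Y
  have hs : (W.1 ∩ Y.1).card ≤ b := (card_le_card inter_subset_left).trans_eq W.2
  have h0 := congrFun (congrFun (incl_zero (K := K) (α := α) (b := b)) W) Y
  simp only [incl, of_apply, Nat.sub_zero, one_apply, Subtype.ext_iff] at h0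
  rw [Matrix.sum_apply]
  simp only [rel, Matrix.smul_apply, incl, of_apply, smul_eq_mul]
  set s := (W.1 ∩ Y.1).card
  have h1 := alternating_sum_choose_mul K b s (b - k) hs (by omega)
  rw [← sum_range_reflect, sum_range_succ'] at h1
  rw [range_eq_Ico, sum_Ico_add' (fun j => (-1 : K) ^ (b + 1 - 1 - j) *
    ((b + 1 - 1 - j).choose (b - k) : K) * (s.choose (b + 1 - 1 - j) : K)) 0 b 1] at h1
  have hI : Ico (0 + 1) (b + 1) = Icc 1 b := by ext; simp
  have h2 : ∑ t ∈ Icc 1 b, (-1 : K) ^ (b + 1 - 1 - t) *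
      ((b + 1 - 1 - t).choose (b - k) : K) * (s.choose (b + 1 - 1 - t) : K) =
      -(-1) ^ b * ∑ t ∈ Icc 1 b, (-1) ^ (t - 1) * ((b - t).choose (b - k) : K) *
        (s.choose (b - t) : K) := by
    rw [mul_sum]
    refine sum_congr rfl fun t ht => ?_
    have ht := mem_Icc.mp ht
    obtain ⟨t, rfl⟩ : ∃ c, t = c + 1 := ⟨t - 1, by omega⟩
    obtain ⟨d, rfl⟩ : ∃ d, b = t + 1 + d := ⟨b - (t + 1), by omega⟩
    have e3 : t + 1 + d + 1 - 1 - (t + 1) = d := by omega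
    have e4 : t + 1 + d - (t + 1) = d := by omega
    rw [e3, e4, Nat.add_sub_cancel, pow_add, pow_add]
    have : ((-1 : K) ^ t) * (-1) ^ t = 1 := by rw [← mul_pow]; simp
    linear_combination (-(-1) ^ d * (d.choose (t + 1 + d - k) : K) * (s.choose d : K)) * this
  rw [hI, h2, Nat.add_sub_cancel, Nat.sub_zero, h0, Nat.choose_symm hk] at h1
  have hiff : s + k = b ↔ s = b - k := by omega
  simp only [hiff]
  have hb2 : ((-1 : K) ^ b) * (-1) ^ b = 1 := by rw [← mul_pow]; simp
  have hbk : ((-1 : K) ^ b) * (-1) ^ (b - k) = (-1) ^ k := by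
    obtain ⟨d, rfl⟩ : ∃ d, b = k + d := ⟨b - k, by omega⟩
    rw [Nat.add_sub_cancel_left, pow_add, mul_assoc, ← mul_pow]
    simp
  set S₁ : K := ∑ t ∈ Icc 1 b, (-1 : K) ^ (t - 1) * ((b - t).choose (b - k) : K) *
        (s.choose (b - t) : K)
  by_cases hW : W.1 = Y.1 <;> by_cases hsk : s = b - k <;> simp only [hW, hsk, if_true, if_false] at h1 ⊢
  · linear_combination (-1 : K) ^ b * h1 + (S₁ - (b.choose k : K)) * hb2 + hbk
  · linear_combination (-1 : K) ^ b * h1 + (S₁ - (b.choose k : K)) * hb2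
  · linear_combination (-1 : K) ^ b * h1 + S₁ * hb2 + hbk
  · linear_combination (-1 : K) ^ b * h1 + S₁ * hb2

variable (K) in
/-- The eigenvalues of `rel K α b k`. -/
def eig (a b k j : ℕ) : K :=
  ∑ t ∈ Icc 1 j, (-1 : K) ^ (t - 1) * ((b - t).choose (b - k) : K) * (j.choose t : K) *
    ((a - b + j + t).choose t : K)

lemma rel_triangular [CharZero K] [Fintype α] (hα : Fintype.card α = a + b) (hba : b ≤ a)
    {k : ℕ} (hk : k ≤ b) (Z : Finset α) (hZ : Z.card ≤ b) :
    (rel K α b k).mulVecLin (up K b Z) - eig K a b k (b - Z.card) • up K b Z ∈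
      filt K α b Z.card := by
  have h : (rel K α b k).mulVecLin (up K b Z) - eig K a b k (b - Z.card) • up K b Z =
      ∑ t ∈ Icc 1 b, ((-1) ^ (t - 1) * ((b - t).choose (b - k) : K)) •
        (incl K α b t *ᵥ up K b Z -
          (((b - Z.card).choose t : K) * ((a - Z.card + t).choose t : K)) • up K b Z) := by
    have he : eig K a b k (b - Z.card) = ∑ t ∈ Icc 1 b,
        ((-1) ^ (t - 1) * ((b - t).choose (b - k) : K)) *
          (((b - Z.card).choose t : K) * ((a - Z.card + t).choose t : K)) := by
      rw [eig, ← sum_subset (Icc_subset_Icc_right (show b - Z.card ≤ b by omega))]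
      · refine sum_congr rfl fun t _ => ?_
        rw [show a - b + (b - Z.card) + t = a - Z.card + t by omega]
        ring
      · intro t ht ht'
        rw [Nat.choose_eq_zero_of_lt (show b - Z.card < t by
          simp only [mem_Icc] at ht ht'; omega)]
        simp
    rw [mulVecLin_apply, rel_eq_sum hk, sum_mulVec, he, sum_smul, ← sum_sub_distrib]
    refine sum_congr rfl fun t _ => ?_
    rw [smul_mulVec, smul_sub, smul_smul]
  rw [h]
  exact sum_mem fun t ht => Submodule.smul_mem _ _
    (incl_triangular hα hba t (mem_Icc.mp ht).2 Z hZ)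

lemma up_eq_single (Y : Sub α b) : up K b Y.1 = Pi.single Y 1 := by
  ext W
  have : Y.1 ⊆ W.1 ↔ W = Y := ⟨fun h => Subtype.ext
    (eq_of_subset_of_card_le h (by rw [W.2, Y.2])).symm, fun h => h ▸ subset_rfl⟩
  simp [up, this, Pi.single_apply]

lemma range_le_of_up [Fintype α] {φ : (Sub α b → K) →ₗ[K] (Sub α b → K)}
    {N : Submodule K (Sub α b → K)} (h : ∀ Y : Sub α b, φ (up K b Y.1) ∈ N) :
    LinearMap.range φ ≤ N := by
  rintro _ ⟨x, rfl⟩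
  rw [pi_eq_sum_univ' x, map_sum]
  refine sum_mem fun Y _ => ?_
  have := h Y
  rw [up_eq_single] at this
  rw [map_smul]
  refine Submodule.smul_mem _ _ ?_
  convert this using 2

lemma range_rel_le [CharZero K] [Fintype α] (hα : Fintype.card α = a + b) (hba : b ≤ a)
    {k : ℕ} (hk : k ≤ b) : LinearMap.range (rel K α b k).mulVecLin ≤ filt K α b b := by
  refine range_le_of_up fun Y => ?_
  have := rel_triangular (K := K) hα hba hk Y.1 Y.2.le
  simpa [Y.2, eig] using this

lemma filt_zero : filt K α b 0 = ⊥ := by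
  simp [filt]

/-- A triangular linear map with nonzero diagonal entries maps the filtration onto itself. -/
lemma filt_le_map {φ : (Sub α b → K) →ₗ[K] (Sub α b → K)} {e : ℕ → K} {m : ℕ}
    (h : ∀ Z : Finset α, Z.card < m → φ (up K b Z) - e Z.card • up K b Z ∈ filt K α b Z.card)
    (he : ∀ i < m, e i ≠ 0) : filt K α b m ≤ (filt K α b m).map φ := by
  induction m with
  | zero => simp [filt_zero]
  | succ m ih =>
    have ih := (ih (fun Z hZ => h Z (by omega)) (fun i hi => he i (by omega))).trans
      (Submodule.map_mono (filt_mono (Nat.le_succ m)))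
    refine Submodule.span_le.mpr ?_
    rintro _ ⟨Z, hZ, rfl⟩
    have h1 := ih (filt_mono (Nat.lt_succ_iff.mp hZ) (h Z hZ))
    have h2 := Submodule.smul_mem _ (e Z.card)⁻¹
      (sub_mem (Submodule.mem_map_of_mem (f := φ) (up_mem_filt (K := K) (b := b) hZ)) h1)
    rwa [sub_sub_cancel, inv_smul_smul₀ (he _ hZ)] at h2

lemma filt_ne_succ [CharZero K] [Fintype α] (hα : Fintype.card α = a + b) (hba : b ≤ a) {m : ℕ}
    (hm : m ≤ b) : filt K α b m ≠ filt K α b (m + 1) := by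
  obtain ⟨ι⟩ : Nonempty (Fin m ⊕ Fin m ↪ α) :=
    Function.Embedding.nonempty_of_card_le (by simp [hα]; omega)
  set p : Fin m → α := fun i => ι (Sum.inl i) with hp
  set q : Fin m → α := fun i => ι (Sum.inr i) with hq
  have hpq : ∀ i j, p i ≠ q j := fun i j h => by simpa using ι.injective h
  have hpi : Function.Injective p := fun i j h => by simpa using ι.injective h
  have hqi : Function.Injective q := fun i j h => by simpa using ι.injective h
  set w : Finset α → K := fun Y => ∏ i, ((if p i ∈ Y then 1 else 0) - if q i ∈ Y then 1 else 0)
    with hw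
  set ℓ : (Sub α b → K) →ₗ[K] K := ∑ Y : Sub α b, w Y.1 • LinearMap.proj Y with hℓ
  have hℓ' : ∀ f, ℓ f = ∑ Y : Sub α b, w Y.1 * f Y := fun f => by
    simp [hℓ, LinearMap.sum_apply]
  have hker : filt K α b m ≤ LinearMap.ker ℓ := by
    refine Submodule.span_le.mpr ?_
    rintro _ ⟨X, hX, rfl⟩
    obtain ⟨i, hpX, hqX⟩ : ∃ i, p i ∉ X ∧ q i ∉ X := by
      by_contra! h
      have h1 : ∀ i, ∃ s : Fin m ⊕ Fin m, Sum.elim id id s = i ∧ ι s ∈ X := fun i => by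
        by_cases hi : p i ∈ X
        · exact ⟨Sum.inl i, rfl, hi⟩
        · exact ⟨Sum.inr i, rfl, h i hi⟩
      choose s hs hsX using h1
      have h2 := card_le_card_of_injOn (s := (univ : Finset (Fin m))) (t := X) (fun i => ι (s i))
        (fun i _ => hsX i) (fun i _ j _ hij => by
          rw [← hs i, ← hs j, ι.injective hij])
      simp at h2
      omega
    set σ := Equiv.swap (p i) (q i) with hσ
    set e : Sub α b ≃ Sub α b := (σ.finsetCongr).subtypeEquiv (fun Y => by simp) with he
    have hmem : ∀ (Y : Sub α b) x, x ∈ (e Y).1 ↔ σ x ∈ Y.1 := fun Y x => by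
      simp [he, mem_map_equiv, hσ]
    have hneg : ∀ Y : Sub α b, w (e Y).1 * up K b X (e Y) = -(w Y.1 * up K b X Y) := by
      intro Y
      have hup : up K b X (e Y) = up K b X Y := by
        have : X ⊆ (e Y).1 ↔ X ⊆ Y.1 := by
          refine forall_congr' fun x => forall_congr' fun hx => ?_
          rw [hmem, hσ, Equiv.swap_apply_of_ne_of_ne (fun h : x = p i => hpX (h ▸ hx))
            (fun h : x = q i => hqX (h ▸ hx))]
        simp [up, this]
      have hw' : w (e Y).1 = -w Y.1 := by
        simp only [hw, hmem]
        rw [← mul_prod_erase univ _ (mem_univ i),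
          ← mul_prod_erase univ (fun i => ((if p i ∈ Y.1 then (1 : K) else 0) -
            if q i ∈ Y.1 then 1 else 0)) (mem_univ i), ← neg_mul]
        congr 1
        · simp [hσ]
        · refine prod_congr rfl fun j hj => ?_
          have hj := ne_of_mem_erase hj
          rw [hσ, Equiv.swap_apply_of_ne_of_ne (hpi.ne hj) (hpq j i),
            Equiv.swap_apply_of_ne_of_ne (hpq i j).symm (hqi.ne hj)]
      rw [hup, hw', neg_mul]
    have h2 : ℓ (up K b X) = -ℓ (up K b X) := by
      conv_lhs => rw [hℓ', ← Equiv.sum_comp e]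
      rw [hℓ', sum_congr rfl fun Y _ => hneg Y, sum_neg_distrib]
    exact self_eq_neg.mp h2
  intro h
  set Z := univ.image p with hZ
  set Q := univ.image q with hQ
  have hZc : Z.card = m := by simp [hZ, card_image_of_injective _ hpi]
  have hQc : Q.card = m := by simp [hQ, card_image_of_injective _ hqi]
  have h0 : ℓ (up K b Z) = 0 := hker (h ▸ up_mem_filt (by omega))
  have hterm : ∀ Y : Sub α b, w Y.1 * up K b Z Y = if Z ⊆ Y.1 ∧ Y.1 ⊆ Qᶜ then 1 else 0 := by
    intro Y
    by_cases hZY : Z ⊆ Y.1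
    · have hpY : ∀ i, p i ∈ Y.1 := fun i => hZY (mem_image_of_mem p (mem_univ i))
      by_cases hQY : Y.1 ⊆ Qᶜ
      · have hqY : ∀ i, q i ∉ Y.1 := fun i hi =>
          mem_compl.mp (hQY hi) (mem_image_of_mem q (mem_univ i))
        simp [hw, up, hpY, hqY, hZY, hQY]
      · obtain ⟨y, hyY, hyQ⟩ := not_subset.mp hQY
        obtain ⟨i, -, rfl⟩ := mem_image.mp (by simpa using hyQ : y ∈ Q)
        rw [if_neg (fun h => hQY h.2), hw]
        simp only
        rw [prod_eq_zero (mem_univ i) (by simp [hpY, hyY]), zero_mul]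
    · simp [up, hZY]
  rw [hℓ', sum_congr rfl fun Y _ => hterm Y, sum_boole, Nat.cast_eq_zero, card_eq_zero] at h0
  obtain ⟨Y, h1, h2, h3⟩ := exists_subsuperset_card_eq (s := Z) (t := Qᶜ) (n := b)
    (by
      intro x hx
      obtain ⟨i, -, rfl⟩ := mem_image.mp hx
      simp only [hQ, mem_compl, mem_image, mem_univ, true_and, not_exists]
      exact fun j => (hpq i j).symm)
    (by omega) (by rw [card_compl, hα, hQc]; omega)
  have : (⟨Y, h3⟩ : Sub α b) ∈ (∅ : Finset (Sub α b)) := h0 ▸ mem_filter.mpr ⟨mem_univ _, h1, h2⟩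
  simp at this

lemma incl_one_coef_ne_zero [CharZero K] (hba : b ≤ a) {i : ℕ} (hi : i < b) :
    ((b : K) - i) * ((a : K) - i + 1) ≠ 0 := by
  rw [← Nat.cast_sub hi.le, ← Nat.cast_sub (hi.le.trans hba)]
  exact_mod_cast mul_ne_zero (by omega) (by omega)

lemma filt_le_map_incl_one [CharZero K] [Fintype α] (hα : Fintype.card α = a + b) (hba : b ≤ a)
    (hb : 1 ≤ b) : filt K α b b ≤ (filt K α b b).map (incl K α b 1).mulVecLin :=
  filt_le_map (e := fun i => ((b : K) - i) * ((a : K) - i + 1))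
    (fun Z _ => incl_one_triangular hα hb Z) fun _ hi => incl_one_coef_ne_zero hba hi

lemma range_incl_one [CharZero K] [Fintype α] (hα : Fintype.card α = a + b) (hba : b ≤ a)
    (hb : 1 ≤ b) : LinearMap.range (incl K α b 1).mulVecLin = filt K α b b := by
  refine le_antisymm (range_le_of_up fun Y => ?_)
    ((filt_le_map_incl_one hα hba hb).trans (LinearMap.map_le_range))
  have := incl_one_triangular (K := K) hα hb Y.1
  simpa [Y.2] using this

lemma eq_zero_of_incl_one_mulVec [CharZero K] [Fintype α] (hα : Fintype.card α = a + b)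
    (hba : b ≤ a) (hb : 1 ≤ b) {x : Sub α b → K} (hx : x ∈ filt K α b b)
    (h : incl K α b 1 *ᵥ x = 0) : x = 0 := by
  have hmaps : ∀ x ∈ filt K α b b, (incl K α b 1).mulVecLin x ∈ filt K α b b := fun x _ =>
    range_incl_one (K := K) hα hba hb ▸ LinearMap.mem_range_self _ x
  have hsurj : Function.Surjective ((incl K α b 1).mulVecLin.restrict hmaps) := by
    rintro ⟨y, hy⟩
    obtain ⟨z, hz, hzy⟩ := filt_le_map_incl_one hα hba hb hy
    exact ⟨⟨z, hz⟩, Subtype.ext hzy⟩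
  have hinj := LinearMap.injective_iff_surjective.mpr hsurj
  have : (⟨x, hx⟩ : filt K α b b) = 0 := hinj (by
    rw [map_zero]
    exact Subtype.ext h)
  exact congrArg Subtype.val this

/-- The range of the symmetrized Garnir operator fills the expected subspace iff all its
nontrivial eigenvalues are nonzero. -/
theorem range_rel_eq_filt_iff [CharZero K] [Fintype α] (hα : Fintype.card α = a + b)
    (hba : b ≤ a) {k : ℕ} (hb : 1 ≤ b) (hk : k ≤ b) :
    LinearMap.range (rel K α b k).mulVecLin = filt K α b b ↔
      ∀ j, 1 ≤ j → j ≤ b → eig K a b k j ≠ 0 := by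
  constructor
  · intro hrange j hj1 hjb hj
    have hinj : ∀ x ∈ filt K α b b, rel K α b k *ᵥ x = 0 → x = 0 := by
      intro x hx h
      have horth : ∀ z ∈ filt K α b b, x ⬝ᵥ z = 0 := by
        rw [← hrange]
        rintro _ ⟨y, rfl⟩
        rw [mulVecLin_apply, dotProduct_mulVec, ← mulVec_transpose, rel_transpose, h,
          zero_dotProduct]
      refine eq_zero_of_incl_one_mulVec hα hba hb hx (dotProduct_eq_zero _ fun y => ?_)
      have := horth (incl K α b 1 *ᵥ y) (range_incl_one (K := K) hα hba hb ▸
        LinearMap.mem_range_self (incl K α b 1).mulVecLin y)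
      rwa [dotProduct_mulVec, ← mulVec_transpose, incl_transpose] at this
    set m := b - j with hm
    have hmaps : ∀ x ∈ filt K α b (m + 1), (rel K α b k).mulVecLin x ∈ filt K α b m := by
      have : filt K α b (m + 1) ≤ (filt K α b m).comap (rel K α b k).mulVecLin := by
        refine Submodule.span_le.mpr ?_
        rintro _ ⟨Z, hZ, rfl⟩
        have h1 := rel_triangular (K := K) hα hba hk Z (by omega)
        rcases Nat.lt_succ_iff_lt_or_eq.mp hZ with h | h
        · have := add_mem (filt_mono h.le h1)
            (Submodule.smul_mem _ (eig K a b k (b - Z.card)) (up_mem_filt h))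
          simpa using this
        · rw [h, show b - m = j by omega, hj, zero_smul, sub_zero] at h1
          exact h1
      exact this
    have hfin := LinearMap.finrank_le_finrank_of_injective
      (f := (rel K α b k).mulVecLin.restrict hmaps) (by
        rw [← LinearMap.ker_eq_bot, LinearMap.ker_eq_bot']
        rintro ⟨x, hx⟩ h
        exact Subtype.ext (hinj x (filt_mono (by omega) hx) (congrArg Subtype.val h)))
    exact filt_ne_succ hα hba (by omega)
      (Submodule.eq_of_le_of_finrank_le (filt_mono (Nat.le_succ m)) hfin)
  · intro h
    refine le_antisymm (range_rel_le hα hba hk) ((filt_le_map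
      (e := fun i => eig K a b k (b - i)) (fun Z hZ => rel_triangular hα hba hk Z hZ.le)
      fun i hi => h _ (by omega) (by omega)).trans LinearMap.map_le_range)

/-- The indicator of the `b`-subsets containing `D` and avoiding `B`. -/
def between (K : Type*) [Field K] (b : ℕ) (D B : Finset α) : Sub α b → K :=
  fun W => if D ⊆ W.1 ∧ Disjoint B W.1 then 1 else 0

lemma between_insert (D B : Finset α) (x : α) :
    between K b D (insert x B) = between K b D B - between K b (insert x D) B := by
  ext W
  simp only [between, Pi.sub_apply, disjoint_insert_left, insert_subset_iff]
  by_cases hx : x ∈ W.1 <;> by_cases hD : D ⊆ W.1 <;> by_cases hB : Disjoint B W.1 <;>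
    simp [hx, hD, hB]

lemma between_sub_up_mem_filt (D B : Finset α) (h : Disjoint D B) :
    between K b D B - (-1 : K) ^ B.card • up K b (D ∪ B) ∈ filt K α b (D.card + B.card) := by
  induction B using Finset.induction_on generalizing D with
  | empty =>
    have : between K b D ∅ = up K b D := by ext; simp [between, up]
    simp [this]
  | insert x B hx ih =>
    have hxD : x ∉ D := fun h' => (disjoint_left.mp h h') (mem_insert_self x B)
    have hDB : Disjoint D B := h.mono_right (subset_insert x B)
    have h1 := ih D hDB
    have h2 := ih (insert x D) (disjoint_insert_left.mpr ⟨hx, hDB⟩)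
    rw [card_insert_of_notMem hxD] at h2
    have h3 : up K b (D ∪ B) ∈ filt K α b (D.card + B.card + 1) :=
      up_mem_filt (by rw [card_union_of_disjoint hDB]; omega)
    rw [between_insert, card_insert_of_notMem hx, union_insert]
    rw [insert_union, show D.card + 1 + B.card = D.card + B.card + 1 by omega] at h2
    have h4 := sub_mem (add_mem (filt_mono (Nat.le_succ _) h1)
      (Submodule.smul_mem _ ((-1 : K) ^ B.card) h3)) h2
    convert h4 using 1
    · rfl
    · rw [pow_succ]
      module

end Johnson

namespace Specht

open Finset

section Exchange

variable {X : Type*} [DecidableEq X]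

/-- The product of the transpositions exchanging `p i` and `q i`. -/
def swaps {k : ℕ} (p q : Fin k → X) : Equiv.Perm X :=
  (List.ofFn fun i => Equiv.swap (p i) (q i)).prod

lemma swaps_succ {k : ℕ} (p q : Fin (k + 1) → X) :
    swaps p q = Equiv.swap (p 0) (q 0) * swaps (fun i => p i.succ) (fun i => q i.succ) := by
  simp [swaps, List.ofFn_succ]

lemma swaps_apply_of_ne {k : ℕ} {p q : Fin k → X} {x : X} (hp : ∀ i, x ≠ p i)
    (hq : ∀ i, x ≠ q i) : swaps p q x = x := by
  induction k with
  | zero => simp [swaps]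
  | succ k ih =>
    rw [swaps_succ, Equiv.Perm.mul_apply, ih (fun i => hp _) (fun i => hq _),
      Equiv.swap_apply_of_ne_of_ne (hp 0) (hq 0)]

lemma swaps_apply {k : ℕ} {p q : Fin k → X} (hp : Function.Injective p)
    (hq : Function.Injective q) (hpq : ∀ i j, p i ≠ q j) (i : Fin k) :
    swaps p q (p i) = q i ∧ swaps p q (q i) = p i := by
  induction k with
  | zero => exact i.elim0
  | succ k ih =>
    simp only [swaps_succ, Equiv.Perm.mul_apply]
    induction i using Fin.cases with
    | zero =>
      rw [swaps_apply_of_ne (fun i => hp.ne (Fin.succ_ne_zero i).symm) (fun i => hpq _ _),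
        swaps_apply_of_ne (fun i => (hpq _ _).symm) (fun i => hq.ne (Fin.succ_ne_zero i).symm)]
      simp
    | succ i =>
      obtain ⟨h1, h2⟩ := ih (p := fun i => p i.succ) (q := fun i => q i.succ)
        (hp.comp (Fin.succ_injective k)) (hq.comp (Fin.succ_injective k))
        (fun i j => hpq _ _) i
      rw [h1, h2, Equiv.swap_apply_of_ne_of_ne (hpq _ _).symm (hq.ne (Fin.succ_ne_zero i)),
        Equiv.swap_apply_of_ne_of_ne (hp.ne (Fin.succ_ne_zero i)) (hpq _ _)]
      simp

lemma sign_swaps [Fintype X] {k : ℕ} {p q : Fin k → X} (hpq : ∀ i j, p i ≠ q j) :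
    Equiv.Perm.sign (swaps p q) = (-1) ^ k := by
  induction k with
  | zero => simp [swaps]
  | succ k ih =>
    rw [swaps_succ, Equiv.Perm.sign_mul, Equiv.Perm.sign_swap (hpq 0 0), ih (fun i j => hpq _ _), pow_succ, mul_comm]

end Exchange

variable {L : ℕ} {μ : Fin L → ℕ} {r : ℕ}

/-- The entries of a tableau in the cells of column `c` recorded by `A`. -/
def entries (T : Tab μ r) (c : Fin L) (A : Finset (Fin (μ c))) : Finset (Fin r) :=
  A.image fun j => T ⟨c, j⟩

lemma apply_mem_entries {T : Tab μ r} {c : Fin L} {A : Finset (Fin (μ c))} {j : Fin (μ c)} :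
    T ⟨c, j⟩ ∈ entries T c A ↔ j ∈ A := by
  simp [entries]

lemma card_entries (T : Tab μ r) (c : Fin L) (A : Finset (Fin (μ c))) :
    (entries T c A).card = A.card :=
  card_image_of_injective _ fun i j h => by simpa using h

lemma mem_entries_univ {T : Tab μ r} {c : Fin L} {y : Fin r} :
    y ∈ entries T c univ ↔ (T.symm y).1 = c := by
  constructor
  · intro h
    obtain ⟨j, -, rfl⟩ := mem_image.mp h
    simp
  · rintro rfl
    exact mem_image.mpr ⟨(T.symm y).2, mem_univ _, by simp⟩

lemma entries_univ_trans {T : Tab μ r} {π : Equiv.Perm (Cell μ)} (hπ : ∀ x, (π x).1 = x.1)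
    (c : Fin L) : entries (π.trans T) c univ = entries T c univ := by
  ext y
  rw [mem_entries_univ, mem_entries_univ, Equiv.symm_trans_apply, ← hπ (π.symm _),
    Equiv.apply_symm_apply]

lemma swap_fst {c : Fin L} (i j : Fin (μ c)) (x : Cell μ) :
    (Equiv.swap (⟨c, i⟩ : Cell μ) ⟨c, j⟩ x).1 = x.1 := by
  rw [Equiv.swap_apply_def]
  split_ifs with h h'
  · rw [h]
  · rw [h']
  · rfl

/-- Exchanging cells of two distinct columns changes the entries of the second one accordingly. -/
lemma entries_swaps {T : Tab μ r} {c₀ c₁ : Fin L} (hc : c₀ ≠ c₁) {k : ℕ}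
    {A : Fin k → Fin (μ c₀)} {B : Fin k → Fin (μ c₁)} (hA : Function.Injective A)
    (hB : Function.Injective B) :
    entries ((swaps (fun i => (⟨c₀, A i⟩ : Cell μ)) fun i => ⟨c₁, B i⟩).trans T) c₁ univ =
      (entries T c₁ univ \ entries T c₁ (univ.image B)) ∪ entries T c₀ (univ.image A) := by
  set p : Fin k → Cell μ := fun i => ⟨c₀, A i⟩ with hp
  set q : Fin k → Cell μ := fun i => ⟨c₁, B i⟩ with hq
  have hpi : Function.Injective p := fun i j h => hA (by simpa [hp] using h)
  have hqi : Function.Injective q := fun i j h => hB (by simpa [hq] using h)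
  have hpq : ∀ i j, p i ≠ q j := fun i j h => hc (congrArg Sigma.fst h)
  ext y
  obtain ⟨z, rfl⟩ := T.surjective y
  rw [mem_entries_univ, Equiv.symm_trans_apply, Equiv.symm_apply_apply, mem_union, mem_sdiff,
    mem_entries_univ, Equiv.symm_apply_apply]
  by_cases h1 : ∃ i, z = p i
  · obtain ⟨i, rfl⟩ := h1
    rw [(Equiv.symm_apply_eq _).mpr (swaps_apply hpi hqi hpq i).2.symm]
    simp only [hp, hq, true_iff]
    exact Or.inr (apply_mem_entries.mpr (mem_image_of_mem A (mem_univ i)))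
  · have hzA : T z ∉ entries T c₀ (univ.image A) := by
      intro h
      obtain ⟨j, hj, h⟩ := mem_image.mp h
      obtain ⟨i, -, rfl⟩ := mem_image.mp hj
      exact h1 ⟨i, (T.injective h).symm⟩
    by_cases h2 : ∃ i, z = q i
    · obtain ⟨i, rfl⟩ := h2
      rw [(Equiv.symm_apply_eq _).mpr (swaps_apply hpi hqi hpq i).1.symm]
      have hzB : T (q i) ∈ entries T c₁ (univ.image B) :=
        apply_mem_entries.mpr (mem_image_of_mem B (mem_univ i))
      simp [hp, hc, hzA, hzB]
    · push Not at h1 h2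
      have hzB : T z ∉ entries T c₁ (univ.image B) := by
        intro h
        obtain ⟨j, hj, h⟩ := mem_image.mp h
        obtain ⟨i, -, rfl⟩ := mem_image.mp hj
        exact h2 i (T.injective h).symm
      rw [(Equiv.symm_apply_eq _).mpr (swaps_apply_of_ne h1 h2).symm]
      simp [hzA, hzB]

/-- The sign of a tableau relative to a reference tableau. -/
def tabSign (T₀ T : Tab μ r) : ℤ := Equiv.Perm.sign (T₀.symm.trans T)

lemma tabSign_trans (T₀ T : Tab μ r) (π : Equiv.Perm (Cell μ)) :
    tabSign T₀ (π.trans T) = Equiv.Perm.sign π * tabSign T₀ T := by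
  have h : T₀.symm.trans (π.trans T) =
      (T₀.symm.trans T : Equiv.Perm (Fin r)) * ((T₀.symm.trans π).trans T₀) := by
    ext; simp
  rw [tabSign, h, Equiv.Perm.sign_mul, Equiv.Perm.sign_symm_trans_trans, mul_comm]
  push_cast
  rfl

lemma tabSign_mul_self (T₀ T : Tab μ r) : tabSign T₀ T * tabSign T₀ T = 1 := by
  rw [tabSign, ← Units.val_mul, Int.units_mul_self, Units.val_one]

variable (K : Type) [Field K]

lemma tabloid_swap_s14 (T : Tab μ r) (c : Fin L) {i j : Fin (μ c)} (hij : i ≠ j) :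
    tabloid K μ r ((Equiv.swap (⟨c, i⟩ : Cell μ) ⟨c, j⟩).trans T) = -tabloid K μ r T := by
  rw [eq_neg_iff_add_eq_zero, add_comm]
  exact (Submodule.Quotient.mk_eq_zero _).mpr (Submodule.subset_span ⟨T, c, i, j, hij, rfl⟩)

lemma tabloid_trans (T : Tab μ r) (π : Equiv.Perm (Cell μ)) (hπ : ∀ x, (π x).1 = x.1) :
    tabloid K μ r (π.trans T) = ((Equiv.Perm.sign π : ℤ) : K) • tabloid K μ r T := by
  induction hn : π.support.card using Nat.strong_induction_on generalizing π T with
  | _ n ih =>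
    by_cases h1 : π = 1
    · subst h1
      rw [Equiv.Perm.sign_one, Units.val_one, Int.cast_one, one_smul]
      rfl
    · obtain ⟨x, hx⟩ : ∃ x, π x ≠ x := by
        by_contra! h
        exact h1 (Equiv.ext h)
      have hlt := Equiv.Perm.card_support_swap_mul hx
      set π' := Equiv.swap x (π x) * π with hπ'
      obtain ⟨j, hj⟩ : ∃ j : Fin (μ x.1), π x = ⟨x.1, j⟩ := by
        have := hπ x
        generalize π x = y at this
        obtain ⟨c, j⟩ := y
        subst this
        exact ⟨j, rfl⟩
      have hsw : ∀ y, (Equiv.swap x (π x) y).1 = y.1 := fun y => by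
        rw [hj]
        exact swap_fst x.2 j y
      have hπ2 : π = Equiv.swap x (π x) * π' := by rw [hπ', Equiv.swap_mul_self_mul]
      have hsgn : Equiv.Perm.sign π = -Equiv.Perm.sign π' := by
        rw [hπ', Equiv.Perm.sign_mul, Equiv.Perm.sign_swap hx.symm, neg_one_mul, neg_neg]
      have htr : π.trans T = π'.trans ((Equiv.swap x (π x)).trans T) := by
        conv_lhs => rw [hπ2]
        rfl
      rw [htr, ih _ (hn ▸ hlt) _ π' (fun y => by rw [hπ', Equiv.Perm.mul_apply, hsw, hπ]) rfl, hsgn]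
      have : tabloid K μ r ((Equiv.swap x (π x)).trans T) = -tabloid K μ r T := by
        rw [hj]
        refine tabloid_swap_s14 K T x.1 (i := x.2) fun h => hx ?_
        rw [hj, ← h]
      rw [this]
      simp
variable {μ : Fin 2 → ℕ}

/-- The embedding of `M^λ`, for `λ` with two columns, into the functions on the subsets of
size `λ'_2`, twisted by the sign: a tabloid is sent to the entries of its second column. -/
def toSub (T₀ : Tab μ r) : MLam K μ r →ₗ[K] (Johnson.Sub (Fin r) (μ 1) → K) :=
  (colRel K μ r).liftQ (Finsupp.linearCombination K fun T : Tab μ r =>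
      (tabSign T₀ T : K) • Johnson.up K (μ 1) (entries T 1 univ)) <| by
    refine Submodule.span_le.mpr ?_
    rintro _ ⟨T, c, i, j, hij, rfl⟩
    have hne : (⟨c, i⟩ : Cell μ) ≠ ⟨c, j⟩ := fun h => hij (by simpa using h)
    simp [tabSign_trans, Equiv.Perm.sign_swap hne, entries_univ_trans (swap_fst i j)]

lemma toSub_tabloid (T₀ T : Tab μ r) : toSub K T₀ (tabloid K μ r T) =
    (tabSign T₀ T : K) • Johnson.up K (μ 1) (entries T 1 univ) := by
  change Finsupp.linearCombination K _ (Finsupp.single T 1) = _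
  rw [Finsupp.linearCombination_single, one_smul]

variable {K}

lemma mlam_hom_ext {N : Type*} [AddCommGroup N] [Module K N] {L : ℕ} {μ : Fin L → ℕ}
    {f g : MLam K μ r →ₗ[K] N} (h : ∀ T, f (tabloid K μ r T) = g (tabloid K μ r T)) : f = g := by
  refine Submodule.linearMap_qext _ (Finsupp.lhom_ext' fun T => LinearMap.ext_ring ?_)
  exact h T

lemma tabSign_smul_tabloid_eq (T₀ : Tab μ r) {T T' : Tab μ r}
    (h : entries T 1 univ = entries T' 1 univ) :
    (tabSign T₀ T' : K) • tabloid K μ r T' = (tabSign T₀ T : K) • tabloid K μ r T := by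
  set π : Equiv.Perm (Cell μ) := T'.trans T.symm with hπ
  have hT' : T' = π.trans T := by ext; simp [hπ]
  have hcol : ∀ x, (π x).1 = x.1 := by
    intro x
    have h1 : (T.symm (T' x)).1 = 1 ↔ x.1 = 1 := by
      rw [← mem_entries_univ, h, mem_entries_univ, Equiv.symm_apply_apply]
    change (T.symm (T' x)).1 = x.1
    omega
  rw [hT', tabloid_trans K T π hcol, tabSign_trans, smul_smul, mul_comm, Int.cast_mul, ← mul_assoc,
    ← Int.cast_mul, ← Units.val_mul, Int.units_mul_self, Units.val_one, Int.cast_one, one_mul]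

lemma toSub_injective (T₀ : Tab μ r) : Function.Injective (toSub K T₀) := by
  classical
  set g : Johnson.Sub (Fin r) (μ 1) → MLam K μ r := fun Y =>
    if h : ∃ T : Tab μ r, entries T 1 univ = Y.1 then
      (tabSign T₀ h.choose : K) • tabloid K μ r h.choose else 0 with hg
  have hid : ((Pi.basisFun K _).constr K g).comp (toSub K T₀) = LinearMap.id := by
    refine mlam_hom_ext fun T => ?_
    set Y : Johnson.Sub (Fin r) (μ 1) :=
      ⟨entries T 1 univ, by rw [card_entries, card_univ, Fintype.card_fin]⟩ with hY
    have h : ∃ T' : Tab μ r, entries T' 1 univ = Y.1 := ⟨T, rfl⟩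
    have hgY : g Y = (tabSign T₀ T : K) • tabloid K μ r T := by
      rw [hg]
      simp only
      rw [dif_pos h]
      exact tabSign_smul_tabloid_eq T₀ h.choose_spec.symm
    rw [LinearMap.comp_apply, toSub_tabloid, map_smul, show entries T 1 univ = Y.1 from rfl,
      Johnson.up_eq_single, ← Pi.basisFun_apply K, Module.Basis.constr_basis, hgY, smul_smul,
      ← Int.cast_mul, tabSign_mul_self, Int.cast_one, one_smul]
    rfl
  exact Function.LeftInverse.injective (g := (Pi.basisFun K _).constr K g)
    fun x => LinearMap.congr_fun hid x

lemma exists_entries_eq (T₀ : Tab μ r) (Y : Finset (Fin r)) (hY : Y.card = μ 1) :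
    ∃ T : Tab μ r, entries T 1 univ = Y := by
  classical
  have hcard : (entries T₀ 1 univ).card = Y.card := by
    rw [card_entries, card_univ, Fintype.card_fin, hY]
  set e : {x // x ∈ entries T₀ 1 univ} ≃ {x // x ∈ Y} := Finset.equivOfCardEq hcard
  refine ⟨T₀.trans e.extendSubtype, eq_of_subset_of_card_le ?_ ?_⟩
  · intro y hy
    obtain ⟨j, -, rfl⟩ := mem_image.mp hy
    exact e.extendSubtype_mem _ (apply_mem_entries.mpr (mem_univ j))
  · rw [card_entries, card_univ, Fintype.card_fin, hY]

lemma exists_entries_eq_of_mem (T₀ : Tab μ r) (Y : Finset (Fin r)) (hY : Y.card = μ 1)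
    {y : Fin r} (hy : y ∈ Y) (j : Fin (μ 1)) :
    ∃ T : Tab μ r, entries T 1 univ = Y ∧ T ⟨1, j⟩ = y := by
  obtain ⟨T, rfl⟩ := exists_entries_eq T₀ Y hY
  obtain ⟨i, -, rfl⟩ := mem_image.mp hy
  exact ⟨(Equiv.swap (⟨1, i⟩ : Cell μ) ⟨1, j⟩).trans T, entries_univ_trans (swap_fst i j) 1,
    by simp⟩

/-- The effect on the second column of exchanging the cells `A` and `B`. -/
lemma exchange_subset_iff (T : Tab μ r) {A : Finset (Fin (μ 0))} {B : Finset (Fin (μ 1))}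
    (hAB : A.card = B.card) (W : Johnson.Sub (Fin r) (μ 1)) :
    (entries T 1 univ \ entries T 1 B) ∪ entries T 0 A ⊆ W.1 ↔
      A = univ.filter (fun i => T ⟨0, i⟩ ∈ W.1) ∧ B = univ.filter fun j => T ⟨1, j⟩ ∉ W.1 := by
  have hmem0 : ∀ i, T ⟨0, i⟩ ∈ (entries T 1 univ \ entries T 1 B) ∪ entries T 0 A ↔ i ∈ A := by
    intro i
    simp [apply_mem_entries, mem_entries_univ]
  have hmem1 : ∀ j, T ⟨1, j⟩ ∈ (entries T 1 univ \ entries T 1 B) ∪ entries T 0 A ↔ j ∉ B := by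
    intro j
    have : T ⟨1, j⟩ ∉ entries T 0 A := fun h => by
      have := mem_entries_univ.mp (image_subset_image (subset_univ A) h)
      simp at this
    simp [apply_mem_entries, this]
  constructor
  · intro h
    have hdisj : Disjoint (entries T 1 univ \ entries T 1 B) (entries T 0 A) := by
      rw [disjoint_left]
      intro y hy hy'
      have h1 := mem_entries_univ.mp (mem_sdiff.mp hy).1
      have h0 := mem_entries_univ.mp (image_subset_image (subset_univ A) hy')
      rw [h1] at h0
      simp at h0
    have hcard : W.1.card ≤ ((entries T 1 univ \ entries T 1 B) ∪ entries T 0 A).card := by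
      rw [card_union_of_disjoint hdisj, card_sdiff_of_subset
          (show entries T 1 B ⊆ entries T 1 univ from image_subset_image (subset_univ B)),
        card_entries, card_entries, card_entries, W.2, card_univ, Fintype.card_fin]
      omega
    rw [← eq_of_subset_of_card_le h hcard]
    constructor
    · ext i; simp [hmem0]
    · ext j; simp [hmem1]
  · rintro ⟨hA, hB⟩ y hy
    obtain ⟨⟨c, j⟩, rfl⟩ := T.surjective y
    fin_cases c
    · have := (hmem0 j).mp hy
      rw [hA] at this
      exact (mem_filter.mp this).2
    · have := (hmem1 j).mp hy
      rw [hB] at this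
      simpa using this

lemma card_filter_add (T : Tab μ r) (W : Johnson.Sub (Fin r) (μ 1)) :
    (univ.filter fun j => T ⟨1, j⟩ ∉ W.1).card + (W.1 ∩ entries T 1 univ).card = μ 1 ∧
      (univ.filter fun i => T ⟨0, i⟩ ∈ W.1).card + (W.1 ∩ entries T 1 univ).card = μ 1 := by
  constructor
  · have h1 : entries T 1 (univ.filter fun j => T ⟨1, j⟩ ∉ W.1) = entries T 1 univ \ W.1 := by
      ext y
      simp only [entries, mem_image, mem_filter, mem_univ, true_and, mem_sdiff]
      constructor
      · rintro ⟨j, h, rfl⟩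
        exact ⟨⟨j, rfl⟩, h⟩
      · rintro ⟨⟨j, rfl⟩, h⟩
        exact ⟨j, h, rfl⟩
    rw [← card_entries T 1, h1, inter_comm, card_sdiff_add_card_inter, card_entries, card_univ,
      Fintype.card_fin]
  · have h1 : entries T 0 (univ.filter fun i => T ⟨0, i⟩ ∈ W.1) = W.1 \ entries T 1 univ := by
      ext y
      obtain ⟨⟨c, j⟩, rfl⟩ := T.surjective y
      fin_cases c
      · simp [apply_mem_entries, mem_entries_univ]
      · have h : T ⟨1, j⟩ ∉ entries T 0 (univ.filter fun i => T ⟨0, i⟩ ∈ W.1) := fun h => by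
          have := mem_entries_univ.mp (image_subset_image (subset_univ _) h)
          simp at this
        simp [h, mem_entries_univ]
    rw [← card_entries T 0, h1, card_sdiff_add_card_inter, W.2]


lemma toSub_exchange (T₀ T : Tab μ r) {k : ℕ} {A : Fin k → Fin (μ 0)} {B : Fin k → Fin (μ 1)}
    (hA : Function.Injective A) (hB : Function.Injective B) :
    toSub K T₀ (tabloid K μ r
        ((swaps (fun i => (⟨0, A i⟩ : Cell μ)) fun i => ⟨1, B i⟩).trans T)) =
      (tabSign T₀ T : K) • (-1 : K) ^ k • Johnson.up K (μ 1)
        ((entries T 1 univ \ entries T 1 (univ.image B)) ∪ entries T 0 (univ.image A)) := by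
  rw [toSub_tabloid, entries_swaps zero_ne_one hA hB, tabSign_trans,
    sign_swaps fun i j h => zero_ne_one (congrArg Sigma.fst h), smul_smul, mul_comm]
  push_cast
  rfl

lemma image_orderIsoOfFin {n k : ℕ} (A : Finset (Fin n)) (hA : A.card = k) :
    univ.image (fun i => (A.orderIsoOfFin hA i : Fin n)) = A := by
  ext x
  simp only [mem_image, mem_univ, true_and]
  constructor
  · rintro ⟨i, rfl⟩
    exact (A.orderIsoOfFin hA i).2
  · intro h
    exact ⟨(A.orderIsoOfFin hA).symm ⟨x, h⟩, by simp⟩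

lemma orderIsoOfFin_coe_injective {n k : ℕ} (A : Finset (Fin n)) (hA : A.card = k) :
    Function.Injective fun i => (A.orderIsoOfFin hA i : Fin n) :=
  Subtype.val_injective.comp (A.orderIsoOfFin hA).injective

lemma sum_exchange_apply (T : Tab μ r) (k : ℕ) (W : Johnson.Sub (Fin r) (μ 1)) :
    ∑ A ∈ powersetCard k (univ : Finset (Fin (μ 0))),
      ∑ B ∈ powersetCard k (univ : Finset (Fin (μ 1))),
        Johnson.up K (μ 1) ((entries T 1 univ \ entries T 1 B) ∪ entries T 0 A) W =
      if (W.1 ∩ entries T 1 univ).card + k = μ 1 then 1 else 0 := by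
  obtain ⟨h1, h0⟩ := card_filter_add T W
  have h : ∀ A ∈ powersetCard k (univ : Finset (Fin (μ 0))),
      ∑ B ∈ powersetCard k (univ : Finset (Fin (μ 1))),
        Johnson.up K (μ 1) ((entries T 1 univ \ entries T 1 B) ∪ entries T 0 A) W =
      if A = univ.filter (fun i => T ⟨0, i⟩ ∈ W.1) then
        if (W.1 ∩ entries T 1 univ).card + k = μ 1 then 1 else 0 else 0 := by
    intro A hA
    have h : ∀ B ∈ powersetCard k (univ : Finset (Fin (μ 1))),
        Johnson.up K (μ 1) ((entries T 1 univ \ entries T 1 B) ∪ entries T 0 A) W =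
        if B = univ.filter (fun j => T ⟨1, j⟩ ∉ W.1) then
          if A = univ.filter (fun i => T ⟨0, i⟩ ∈ W.1) then 1 else 0 else 0 := by
      intro B hB
      rw [Johnson.up, if_congr (exchange_subset_iff T
        ((mem_powersetCard.mp hA).2.trans (mem_powersetCard.mp hB).2.symm) W) rfl rfl]
      split_ifs <;> tauto
    rw [sum_congr rfl h, sum_ite_eq']
    simp only [mem_powersetCard_univ]
    split_ifs <;> first | rfl | omega
  rw [sum_congr rfl h, sum_ite_eq']
  simp only [mem_powersetCard_univ]
  split_ifs <;> first | rfl | omega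

lemma toSub_sgrElt (T₀ T : Tab μ r) (hc : 0 + 1 < 2) (k : ℕ) :
    toSub K T₀ (sgrElt K μ r T 0 hc k) = (tabSign T₀ T : K) •
      (Johnson.rel K (Fin r) (μ 1) k).mulVecLin (Johnson.up K (μ 1) (entries T 1 univ)) := by
  have hexch : ∀ (A : Finset (Fin (μ 0))) (hA : A.card = k) (B : Finset (Fin (μ 1)))
      (hB : B.card = k), toSub K T₀ (tabloid K μ r ((exch2Perm μ 0 hc k A hA B hB).trans T)) =
      (tabSign T₀ T : K) • (-1 : K) ^ k • Johnson.up K (μ 1)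
        ((entries T 1 univ \ entries T 1 B) ∪ entries T 0 A) := by
    intro A hA B hB
    have := toSub_exchange (K := K) T₀ T (orderIsoOfFin_coe_injective A hA)
      (orderIsoOfFin_coe_injective B hB)
    rw [image_orderIsoOfFin, image_orderIsoOfFin] at this
    exact this
  have hsum : toSub K T₀ (sgrElt K μ r T 0 hc k) =
      ((μ 1).choose k : K) • (tabSign T₀ T : K) • Johnson.up K (μ 1) (entries T 1 univ) -
      ∑ A ∈ powersetCard k (univ : Finset (Fin (μ 0))),
        ∑ B ∈ powersetCard k (univ : Finset (Fin (μ 1))),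
          (tabSign T₀ T : K) • (-1 : K) ^ k • Johnson.up K (μ 1)
            ((entries T 1 univ \ entries T 1 B) ∪ entries T 0 A) := by
    rw [sgrElt, map_sub, map_smul, toSub_tabloid, map_sum]
    congr 1
    refine Eq.trans ?_ (sum_attach (powersetCard k (univ : Finset (Fin (μ 0)))) _)
    refine sum_congr rfl fun A _ => ?_
    rw [map_sum]
    refine Eq.trans ?_ (sum_attach (powersetCard k (univ : Finset (Fin (μ 1)))) _)
    exact sum_congr rfl fun B _ => hexch _ _ _ _
  set Y : Johnson.Sub (Fin r) (μ 1) :=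
    ⟨entries T 1 univ, by rw [card_entries, card_univ, Fintype.card_fin]⟩ with hY
  rw [hsum]
  simp only [← smul_sum]
  rw [smul_comm, ← smul_sub]
  congr 1
  ext W
  have hup := Johnson.up_eq_single (K := K) Y
  rw [Matrix.mulVecLin_apply, show entries T 1 univ = Y.1 from rfl, hup, Matrix.mulVec_single_one]
  simp only [Pi.sub_apply, Pi.smul_apply, Finset.sum_apply, sum_exchange_apply, hY,
    Matrix.col_apply, Johnson.rel, smul_eq_mul]
  congr 1
  rw [Pi.single_apply]
  simp [Subtype.ext_iff]

lemma toSub_garnirElt (T₀ T : Tab μ r) (hc : 0 + 1 < 2) {k : ℕ} (hk : k ≤ μ 1) :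
    toSub K T₀ (garnirElt K μ r T 0 hc k hk) = (tabSign T₀ T : K) •
      (Johnson.up K (μ 1) (entries T 1 univ) - (-1 : K) ^ k • Johnson.between K (μ 1)
        (entries T 1 univ \ entries T 1 (univ.image (Fin.castLE hk)))
        (entries T 1 (univ.image (Fin.castLE hk)))) := by
  set B : Finset (Fin (μ 1)) := univ.image (Fin.castLE hk) with hB
  have hBcard : B.card = k := by
    rw [hB, card_image_of_injective _ (Fin.castLE_injective hk), card_univ, Fintype.card_fin]
  have hexch : ∀ (A : Finset (Fin (μ 0))) (hA : A.card = k),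
      toSub K T₀ (tabloid K μ r ((exchPerm μ 0 hc k hk A hA).trans T)) =
      (tabSign T₀ T : K) • (-1 : K) ^ k • Johnson.up K (μ 1)
        ((entries T 1 univ \ entries T 1 B) ∪ entries T 0 A) := by
    intro A hA
    have := toSub_exchange (K := K) T₀ T (orderIsoOfFin_coe_injective A hA)
      (Fin.castLE_injective hk)
    rw [image_orderIsoOfFin] at this
    exact this
  have hsum : toSub K T₀ (garnirElt K μ r T 0 hc k hk) =
      (tabSign T₀ T : K) • Johnson.up K (μ 1) (entries T 1 univ) -
      ∑ A ∈ powersetCard k (univ : Finset (Fin (μ 0))),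
        (tabSign T₀ T : K) • (-1 : K) ^ k • Johnson.up K (μ 1)
          ((entries T 1 univ \ entries T 1 B) ∪ entries T 0 A) := by
    rw [garnirElt, map_sub, toSub_tabloid, map_sum]
    congr 1
    refine Eq.trans ?_ (sum_attach (powersetCard k (univ : Finset (Fin (μ 0)))) _)
    exact sum_congr rfl fun A _ => hexch _ _
  rw [hsum]
  simp only [← smul_sum]
  rw [← smul_sub]
  congr 3
  ext W
  obtain ⟨h1, h0⟩ := card_filter_add T W
  have hiff : (entries T 1 univ \ entries T 1 B ⊆ W.1 ∧ Disjoint (entries T 1 B) W.1) ↔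
      B = univ.filter fun j => T ⟨1, j⟩ ∉ W.1 := by
    constructor
    · rintro ⟨hD, hdisj⟩
      ext j
      rw [mem_filter]
      refine ⟨fun hj => ⟨mem_univ _, disjoint_left.mp hdisj (apply_mem_entries.mpr hj)⟩,
        fun hj => ?_⟩
      by_contra hjB
      exact hj.2 (hD (by simp [apply_mem_entries, hjB]))
    · intro hBW
      constructor
      · intro y hy
        obtain ⟨hy1, hy2⟩ := mem_sdiff.mp hy
        obtain ⟨j, -, rfl⟩ := mem_image.mp hy1
        rw [apply_mem_entries, hBW] at hy2
        simpa using hy2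
      · rw [disjoint_left]
        intro y hy
        obtain ⟨j, hj, rfl⟩ := mem_image.mp hy
        rw [hBW] at hj
        exact (mem_filter.mp hj).2
  have h : ∀ A ∈ powersetCard k (univ : Finset (Fin (μ 0))),
      Johnson.up K (μ 1) ((entries T 1 univ \ entries T 1 B) ∪ entries T 0 A) W =
      if A = univ.filter (fun i => T ⟨0, i⟩ ∈ W.1) then
        if B = univ.filter (fun j => T ⟨1, j⟩ ∉ W.1) then 1 else 0 else 0 := by
    intro A hA
    rw [Johnson.up, if_congr (exchange_subset_iff T
      ((mem_powersetCard.mp hA).2.trans hBcard.symm) W) rfl rfl]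
    split_ifs <;> tauto
  rw [Finset.sum_apply, sum_congr rfl h, sum_ite_eq', Johnson.between, if_congr hiff rfl rfl]
  simp only [mem_powersetCard_univ]
  split_ifs with h2 h3 h3
  · rfl
  · rfl
  · rw [h3] at hBcard
    omega
  · rfl

lemma toSub_garnirElt_mem (T₀ T : Tab μ r) (hc : 0 + 1 < 2) {k : ℕ} (hk : k ≤ μ 1) :
    toSub K T₀ (garnirElt K μ r T 0 hc k hk) ∈ Johnson.filt K (Fin r) (μ 1) (μ 1) := by
  rw [toSub_garnirElt]
  refine Submodule.smul_mem _ _ ?_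
  set B := entries T 1 (univ.image (Fin.castLE hk)) with hB
  have hBsub : B ⊆ entries T 1 univ := image_subset_image (subset_univ _)
  have hBcard : B.card = k := by
    rw [hB, card_entries, card_image_of_injective _ (Fin.castLE_injective hk), card_univ,
      Fintype.card_fin]
  have hYcard : (entries T 1 univ).card = μ 1 := by
    rw [card_entries, card_univ, Fintype.card_fin]
  have h := Johnson.between_sub_up_mem_filt (K := K) (b := μ 1) (entries T 1 univ \ B) B
    sdiff_disjoint
  rw [sdiff_union_of_subset hBsub, card_sdiff_add_card_eq_card hBsub, hYcard, hBcard] at h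
  have h' := Submodule.smul_mem _ (-(-1 : K) ^ k) h
  convert h' using 1
  rw [smul_sub, smul_smul, neg_mul, ← mul_pow, neg_one_mul, neg_neg, one_pow]
  module

lemma map_toSub_sgrSub (T₀ : Tab μ r) (k : ℕ) :
    (sgrSub K μ r fun _ => k).map (toSub K T₀) =
      LinearMap.range (Johnson.rel K (Fin r) (μ 1) k).mulVecLin := by
  refine le_antisymm ?_ (Johnson.range_le_of_up fun Y => ?_)
  · rw [sgrSub, Submodule.map_span_le]
    rintro _ ⟨T, c, hc, rfl⟩
    obtain rfl : c = 0 := by omega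
    rw [toSub_sgrElt]
    exact Submodule.smul_mem _ _ (LinearMap.mem_range_self _ _)
  · obtain ⟨T, hT⟩ := exists_entries_eq T₀ Y.1 Y.2
    have h : (tabSign T₀ T : K) • toSub K T₀ (sgrElt K μ r T 0 (by omega) k) ∈
        (sgrSub K μ r fun _ => k).map (toSub K T₀) :=
      Submodule.smul_mem _ _ (Submodule.mem_map_of_mem
        (Submodule.subset_span ⟨T, 0, by omega, rfl⟩))
    rwa [toSub_sgrElt, smul_smul, ← Int.cast_mul, tabSign_mul_self, Int.cast_one, one_smul,
      hT] at h

lemma up_mem_map_garnirSub (T₀ : Tab μ r) (hb : 1 ≤ μ 1) {Y : Finset (Fin r)}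
    (hY : Y.card = μ 1) {y : Fin r} (hy : y ∈ Y) :
    Johnson.up K (μ 1) (Y.erase y) ∈ (garnirSub K μ r).map (toSub K T₀) := by
  obtain ⟨T, hT, hTy⟩ := exists_entries_eq_of_mem T₀ Y hY hy ⟨0, hb⟩
  have h : (tabSign T₀ T : K) • toSub K T₀ (garnirElt K μ r T 0 (by omega) 1 hb) ∈
      (garnirSub K μ r).map (toSub K T₀) :=
    Submodule.smul_mem _ _ (Submodule.mem_map_of_mem
      (Submodule.subset_span ⟨T, 0, by omega, 1, hb, rfl⟩))
  have htop : entries T 1 (univ.image (Fin.castLE hb)) = {y} := by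
    rw [← hTy]
    simp [entries]
    rfl
  rw [toSub_garnirElt, smul_smul, ← Int.cast_mul, tabSign_mul_self, Int.cast_one, one_smul, hT,
    htop, sdiff_singleton_eq_erase, ← insert_empty_eq, Johnson.between_insert,
    insert_erase hy] at h
  have hempty : ∀ D : Finset (Fin r), Johnson.between K (μ 1) D ∅ = Johnson.up K (μ 1) D := by
    intro D
    ext
    simp [Johnson.between, Johnson.up]
  rw [hempty, hempty] at h
  simpa using h

lemma map_toSub_garnirSub [CharZero K] (T₀ : Tab μ r) (hr : r = μ 0 + μ 1) (hba : μ 1 ≤ μ 0)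
    (hb : 1 ≤ μ 1) :
    (garnirSub K μ r).map (toSub K T₀) = Johnson.filt K (Fin r) (μ 1) (μ 1) := by
  refine le_antisymm ?_ ?_
  · rw [garnirSub, Submodule.map_span_le]
    rintro _ ⟨T, c, hc, k, hk, rfl⟩
    obtain rfl : c = 0 := by omega
    exact toSub_garnirElt_mem T₀ T hc hk
  · rw [← Johnson.range_incl_one (by rw [Fintype.card_fin, hr]) hba hb]
    refine Johnson.range_le_of_up fun Y => ?_
    have h : (Johnson.incl K (Fin r) (μ 1) 1).mulVecLin (Johnson.up K (μ 1) Y.1) =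
        ∑ y ∈ Y.1, Johnson.up K (μ 1) (Y.1.erase y) := by
      rw [Johnson.up_eq_single, Matrix.mulVecLin_apply, Matrix.mulVec_single_one]
      ext W
      rw [Matrix.col_apply, ← Johnson.incl_transpose, Matrix.transpose_apply,
        Johnson.incl_one_apply hb, Finset.sum_apply]
      rfl
    rw [h]
    exact sum_mem fun y hy => up_mem_map_garnirSub T₀ hb Y.2 hy

lemma sgrSub_le_garnirSub [CharZero K] (T₀ : Tab μ r) (hr : r = μ 0 + μ 1) (hba : μ 1 ≤ μ 0)
    (hb : 1 ≤ μ 1) {k : ℕ} (hk : k ≤ μ 1) : (sgrSub K μ r fun _ => k) ≤ garnirSub K μ r := by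
  rw [← Submodule.map_le_map_iff_of_injective (toSub_injective (K := K) T₀), map_toSub_sgrSub,
    map_toSub_garnirSub T₀ hr hba hb]
  exact Johnson.range_rel_le (by rw [Fintype.card_fin, hr]) hba hk

lemma sgrSub_eq_garnirSub_iff [CharZero K] (T₀ : Tab μ r) (hr : r = μ 0 + μ 1)
    (hba : μ 1 ≤ μ 0) (hb : 1 ≤ μ 1) {k : ℕ} (hk : k ≤ μ 1) :
    (sgrSub K μ r fun _ => k) = garnirSub K μ r ↔
      ∀ j, 1 ≤ j → j ≤ μ 1 → Johnson.eig K (μ 0) (μ 1) k j ≠ 0 := by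
  rw [← (Submodule.map_injective_of_injective (toSub_injective (K := K) T₀)).eq_iff,
    map_toSub_sgrSub, map_toSub_garnirSub T₀ hr hba hb,
    Johnson.range_rel_eq_filt_iff (by rw [Fintype.card_fin, hr]) hba hb hk]

lemma garnirSub_stable {L : ℕ} {μ : Fin L → ℕ}
    {ρ : Equiv.Perm (Fin r) → (MLam K μ r →ₗ[K] MLam K μ r)} (hρ : IsTabAction K μ r ρ)
    (σ : Equiv.Perm (Fin r)) {x : MLam K μ r} (hx : x ∈ garnirSub K μ r) :
    ρ σ x ∈ garnirSub K μ r := by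
  have h : (garnirSub K μ r).map (ρ σ) ≤ garnirSub K μ r := by
    rw [garnirSub, Submodule.map_span_le]
    rintro _ ⟨T, c, hc, k, hk, rfl⟩
    refine Submodule.subset_span ⟨T.trans σ, c, hc, k, hk, ?_⟩
    simp only [garnirElt, map_sub, map_sum, hρ σ, Equiv.trans_assoc]
  exact h (Submodule.mem_map_of_mem hx)

lemma nonempty_tab (hr : r = μ 0 + μ 1) : Nonempty (Tab μ r) :=
  ⟨Fintype.equivFinOfCardEq (by simp [hr])⟩

theorem isQuotIso_iff [CharZero K] (hr : r = μ 0 + μ 1) (hba : μ 1 ≤ μ 0) (hb : 1 ≤ μ 1)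
    {k : ℕ} (hk : k ≤ μ 1) {ρ : Equiv.Perm (Fin r) → (MLam K μ r →ₗ[K] MLam K μ r)}
    (hρ : IsTabAction K μ r ρ) :
    IsQuotIso K (sgrSub K μ r fun _ => k) (garnirSub K μ r) ρ ρ ↔
      ∀ j, 1 ≤ j → j ≤ μ 1 → Johnson.eig K (μ 0) (μ 1) k j ≠ 0 := by
  obtain ⟨T₀⟩ := nonempty_tab hr
  rw [← sgrSub_eq_garnirSub_iff T₀ hr hba hb hk]
  constructor
  · rintro ⟨e, -⟩
    refine Submodule.eq_of_le_of_finrank_eq (sgrSub_le_garnirSub T₀ hr hba hb hk) ?_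
    have h1 := Submodule.finrank_quotient_add_finrank (sgrSub K μ r fun _ => k)
    have h2 := Submodule.finrank_quotient_add_finrank (garnirSub K μ r)
    have h3 := e.finrank_eq
    omega
  · intro h
    rw [h]
    refine ⟨LinearEquiv.refl K _, fun σ x y hxy => ?_⟩
    rw [LinearEquiv.refl_apply, Submodule.Quotient.eq] at hxy ⊢
    rw [← map_sub]
    exact garnirSub_stable hρ σ hxy

end Specht

namespace Specht

/-- Corollary 6.1 of the paper: let `a ≥ b ≥ k ≥ 1` and let `λ = (a,b)'`. Then
`M^λ / SGR^λ(k) ≅ S^λ` as `𝔖_{a+b}`-modules iff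
`Σ_{t=1}^{j} (−1)^{t−1} C(b−t,b−k) C(j,t) C(a−b+j+t,t) ≠ 0` for all `j = 1, …, b`. -/
theorem statement14 (K : Type) [Field K] [CharZero K] (a b k : ℕ)
    (hba : b ≤ a) (hk1 : 1 ≤ k) (hkb : k ≤ b) (r : ℕ) (hr : r = a + b)
    (ρ : Equiv.Perm (Fin r) → (MLam K ![a, b] r →ₗ[K] MLam K ![a, b] r))
    (hρ : IsTabAction K ![a, b] r ρ) :
    IsQuotIso K (sgrSub K ![a, b] r (fun _ => k)) (garnirSub K ![a, b] r) ρ ρ ↔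
      ∀ j : ℕ, 1 ≤ j → j ≤ b →
        (∑ t ∈ Finset.Icc 1 j,
          (-1:K)^(t-1) * ((b-t).choose (b-k) : K) * (j.choose t : K) *
            ((a-b+j+t).choose t : K)) ≠ 0 :=
  isQuotIso_iff (μ := ![a, b]) hr hba (hk1.trans hkb) hkb hρ

end Specht
end
end
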